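/- arXiv:quant-ph/0511149 — 2 statements merged into one kernel-verified Lean document; each statement's English description precedes it below -/
import Mathlib

section
/- Let G be a finite group, let (σ_j)_{j∈J} be a complete family of irreducibles for G, let M ⊆ G be a conjugacy class of involutions with representative m₀, let k ≥ 1, let (ρ_i)_{i∈T} be a complete family of irreducibles for G^k acting on spaces V_i of dimensions d_i, and for each i let B_i be an orthonormal basis of V_i. Let Λ ⊆ J, P(Λ) = Σ_{j∈Λ} d_j²/|G|, and let λ be a real number with 0 ≤ λ < 1 and |χ_j(m₀)| ≤ λ·d_j for every j ∈ J \ Λ; set Δ = λ + P(Λ)·Σ_{j∈J} d_j. For m ∈ M, i ∈ T, b ∈ B_i, set H_m(i,b) = ‖Π_m^{(i)} b‖² / rank(Π_m^{(i)}), with the convention x/0 = 0. Then Σ_{i∈T} (d_i²/|G|^k) · (1/|M|) Σ_{m∈M} Σ_{b∈B_i} | H_m(i,b) − 1/d_i | ≤ 2^k · ( (1−λ)^{-k} · √Δ + 3(λ + P(Λ)) ). -/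
noncomputable section

open scoped BigOperators InnerProductSpace

def IsUnitaryRep {G V : Type*} [Group G] [NormedAddCommGroup V] [InnerProductSpace ℂ V]
    (ρ : Representation ℂ G V) : Prop :=
  ∀ (g : G) (v w : V), ⟪ρ g v, ρ g w⟫_ℂ = ⟪v, w⟫_ℂ

def IsIrreducibleRep {G V : Type*} [Group G] [AddCommGroup V] [Module ℂ V]
    (ρ : Representation ℂ G V) : Prop :=
  (∃ v : V, v ≠ 0) ∧
    ∀ W : Submodule ℂ V, (∀ (g : G) (v : V), v ∈ W → ρ g v ∈ W) → W = ⊥ ∨ W = ⊤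

def RepIso {G V₁ V₂ : Type*} [Group G] [AddCommGroup V₁] [Module ℂ V₁]
    [AddCommGroup V₂] [Module ℂ V₂]
    (ρ₁ : Representation ℂ G V₁) (ρ₂ : Representation ℂ G V₂) : Prop :=
  ∃ e : V₁ ≃ₗ[ℂ] V₂, ∀ (g : G) (v : V₁), e (ρ₁ g v) = ρ₂ g (e v)

def repChar {G V : Type*} [Group G] [AddCommGroup V] [Module ℂ V]
    (ρ : Representation ℂ G V) (g : G) : ℂ := LinearMap.trace ℂ V (ρ g)

def IsCompleteFamily {G : Type*} [Group G] {J : Type*}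
    (W : J → Type*) [∀ j, NormedAddCommGroup (W j)] [∀ j, InnerProductSpace ℂ (W j)]
    [∀ j, FiniteDimensional ℂ (W j)]
    (σ : ∀ j, Representation ℂ G (W j)) : Prop :=
  (∀ j, IsUnitaryRep (σ j)) ∧ (∀ j, IsIrreducibleRep (σ j)) ∧
    (∀ j j', j ≠ j' → ¬ RepIso (σ j) (σ j')) ∧
    (∀ (U : Type) [AddCommGroup U] [Module ℂ U] [FiniteDimensional ℂ U]
      (τ : Representation ℂ G U), IsIrreducibleRep τ → ∃ j, RepIso τ (σ j))

def isoProj {G V : Type*} [Group G] [Fintype G] [AddCommGroup V] [Module ℂ V]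
    (d : ℕ) (χ : G → ℂ) (ρ : Representation ℂ G V) : V →ₗ[ℂ] V :=
  ((d : ℂ) / (Fintype.card G : ℂ)) • ∑ g : G, starRingEnd ℂ (χ g) • (ρ g : V →ₗ[ℂ] V)

def onI {G : Type*} [One G] {k : ℕ} (g : G) (I : Finset (Fin k)) : Fin k → G :=
  fun i => if i ∈ I then g else 1

def invProj {G V : Type*} [Group G] [AddCommGroup V] [Module ℂ V] {k : ℕ}
    (ρ : Representation ℂ (Fin k → G) V) (m : G) : V →ₗ[ℂ] V :=
  ((2 : ℂ) ^ k)⁻¹ • ∑ I : Finset (Fin k), (ρ (onI m I) : V →ₗ[ℂ] V)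

def isoProjI {G V : Type*} [Group G] [Fintype G] [AddCommGroup V] [Module ℂ V] {k : ℕ}
    (ρ : Representation ℂ (Fin k → G) V) (d : ℕ) (χ : G → ℂ) (I : Finset (Fin k)) :
    V →ₗ[ℂ] V :=
  ((d : ℂ) / (Fintype.card G : ℂ)) • ∑ g : G, starRingEnd ℂ (χ g) • (ρ (onI g I) : V →ₗ[ℂ] V)

/-!
Expanding `Π_m` over subsets gives `‖Π_m v‖² = 2⁻ᵏ ∑_I ⟪v, ρ(m^I) v⟫`. By Schur's lemma the
normalized character is multiplicative over coordinates, so the `I`-th term has mean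
`∏_{l ∈ I} χ_ρ(m^{l}) / d_ρ` over an orthonormal basis, and `rank Π_m` is
`2⁻ᵏ d_ρ ∏_l (1 + χ_ρ(m^{l}) / d_ρ)`. If all these ratios are at most `λ` in absolute value, the
`ℓ¹` deviation is therefore controlled by the second moments of the coefficients `⟪v, ρ(m^I) v⟫`.

Both these moments and the character ratios are averages over `M` of positive definite functions
on `G`. The Fourier transform of a positive definite function is positive, so such an average
splits into a part of size at most `λ`, from `j ∉ Λ`, and the weight carried by `Λ`. Plancherel
averages of these weights follow from Fourier inversion on `Gᵏ`, since the regular character of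
`Gᵏ` pulled back along an injective homomorphism `G → Gᵏ` is a multiple of that of `G`. For the
embedding of a single coordinate all the weight sits on one irreducible of `G`, again by Schur's
lemma, so a ratio can exceed `λ` only if that irreducible lies in `Λ`; this has Plancherel
probability `P(Λ)`.
-/

open Module

section Irreducible

variable {G U U' U'' : Type*} [Group G] [AddCommGroup U] [Module ℂ U] [AddCommGroup U']
  [Module ℂ U'] [AddCommGroup U''] [Module ℂ U''] {τ : Representation ℂ G U}
  {τ' : Representation ℂ G U'} {τ'' : Representation ℂ G U''}

theorem RepIso.symm (h : RepIso τ τ') : RepIso τ' τ := by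
  obtain ⟨e, he⟩ := h
  exact ⟨e.symm, fun g v => e.injective (by simp [he])⟩

theorem RepIso.trans (h : RepIso τ τ') (h' : RepIso τ' τ'') : RepIso τ τ'' := by
  obtain ⟨e, he⟩ := h
  obtain ⟨e', he'⟩ := h'
  exact ⟨e.trans e', fun g v => by simp [he, he']⟩

theorem RepIso.nonempty_equiv (h : RepIso τ τ') : Nonempty (τ.Equiv τ') := by
  obtain ⟨e, he⟩ := h
  exact ⟨.mk e fun g => LinearMap.ext (he g)⟩

theorem repIso_iff_nonempty_equiv : RepIso τ τ' ↔ Nonempty (τ.Equiv τ') :=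
  ⟨RepIso.nonempty_equiv, fun ⟨e⟩ => ⟨e.toLinearEquiv, fun g =>
    LinearMap.congr_fun (e.toIntertwiningMap.isIntertwining' g)⟩⟩

theorem RepIso.repChar_eq (h : RepIso τ τ') : repChar τ = repChar τ' :=
  Representation.char_iso h.nonempty_equiv.some

theorem RepIso.isIrreducibleRep (h : RepIso τ τ') (hτ : IsIrreducibleRep τ) :
    IsIrreducibleRep τ' := by
  obtain ⟨e, he⟩ := h
  obtain ⟨⟨v, hv⟩, hmin⟩ := hτ
  refine ⟨⟨e v, by simpa using hv⟩, fun S hS => ?_⟩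
  have hcomap : S.comap e.toLinearMap = ⊥ ∨ S.comap e.toLinearMap = ⊤ :=
    hmin _ fun g v hv => by simpa [he] using hS g _ hv
  rw [← Submodule.map_comap_eq_of_surjective e.surjective S]
  exact hcomap.imp (fun h => by rw [h, Submodule.map_bot])
    fun h => by rw [h, Submodule.map_top, LinearMap.range_eq_top.2 e.surjective]

theorem IsIrreducibleRep.isIrreducible (h : IsIrreducibleRep τ) : τ.IsIrreducible where
  exists_pair_ne := by
    obtain ⟨v, hv⟩ := h.1
    exact ⟨⊥, ⊤, fun hbt => hv <| (Submodule.mem_bot ℂ).1 <|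
      (congrArg Subrepresentation.toSubmodule hbt).ge Submodule.mem_top⟩
  eq_bot_or_eq_top S :=
    (h.2 S.toSubmodule fun g _ hv => S.apply_mem_toSubmodule g hv).imp
      (fun h => Subrepresentation.toSubmodule_injective h)
      fun h => Subrepresentation.toSubmodule_injective h

theorem isIrreducibleRep_toRepresentation_of_isAtom {S : Subrepresentation τ} (hS : IsAtom S) :
    IsIrreducibleRep S.toRepresentation := by
  constructor
  · by_contra! h
    refine hS.1 (Subrepresentation.toSubmodule_injective ?_)
    exact (Submodule.eq_bot_iff _).2 fun v hv => congrArg Subtype.val (h ⟨v, hv⟩)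
  · intro W hW
    let S' : Subrepresentation τ := ⟨W.map S.toSubmodule.subtype, by
      rintro g _ ⟨v, hv, rfl⟩
      exact ⟨_, hW g v hv, rfl⟩⟩
    have hS' : S' ≤ S := by
      rintro _ ⟨v, -, rfl⟩
      exact v.2
    rcases hS.le_iff.1 hS' with h | h
    · left
      have : W.map S.toSubmodule.subtype = ⊥ := congrArg Subrepresentation.toSubmodule h
      exact Submodule.map_injective_of_injective S.toSubmodule.injective_subtype
        (by simpa using this)
    · right
      have : W.map S.toSubmodule.subtype = S.toSubmodule :=
        congrArg Subrepresentation.toSubmodule h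
      exact Submodule.map_injective_of_injective S.toSubmodule.injective_subtype
        (by simpa using this)

theorem subrepresentation_eq_top_of_forall_isAtom_le [Finite G] {K : Subrepresentation τ}
    (hK : ∀ S : Subrepresentation τ, IsAtom S → S ≤ K) : K = ⊤ := by
  let e := Subrepresentation.subrepresentationSubmoduleOrderIso (ρ := τ)
  refine e.injective ?_
  rw [e.map_top, ← top_le_iff, ← IsSemisimpleModule.sSup_simples_eq_top, sSup_le_iff]
  intro N hN
  rw [← e.symm_apply_le]
  exact hK _ ((e.symm.isAtom_iff N).2 (isSimpleModule_iff_isAtom.1 hN))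

theorem repChar_conj (τ : Representation ℂ G U) (g h : G) :
    repChar τ (h * g * h⁻¹) = repChar τ g :=
  Representation.char_conj τ g h

variable [FiniteDimensional ℂ U]

theorem IsIrreducibleRep.finrank_pos (h : IsIrreducibleRep τ) : 0 < finrank ℂ U :=
  have ⟨v, hv⟩ := h.1
  Module.finrank_pos_iff_exists_ne_zero.2 ⟨v, hv⟩

theorem repChar_one (τ : Representation ℂ G U) : repChar τ 1 = finrank ℂ U :=
  Representation.char_one τ

theorem IsIrreducibleRep.eq_trace_div_finrank_smul_one (h : IsIrreducibleRep τ)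
    {A : U →ₗ[ℂ] U} (hA : ∀ g, A * τ g = τ g * A) :
    A = (LinearMap.trace ℂ U A / finrank ℂ U) • (1 : U →ₗ[ℂ] U) := by
  have := h.isIrreducible
  obtain ⟨c, hc⟩ :=
    (Representation.IsIrreducible.algebraMap_intertwiningMap_bijective_of_isAlgClosed
      (ρ := τ)).surjective ⟨A, hA⟩
  have hAc : A = c • (1 : U →ₗ[ℂ] U) :=
    (congrArg Representation.IntertwiningMap.toLinearMap hc).symm
  have hd : (finrank ℂ U : ℂ) ≠ 0 := by exact_mod_cast h.finrank_pos.ne'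
  rw [hAc, map_smul, LinearMap.trace_one, smul_eq_mul, mul_div_cancel_right₀ _ hd]

variable {J : Type*} {W : J → Type*} [∀ j, NormedAddCommGroup (W j)]
  [∀ j, InnerProductSpace ℂ (W j)] [∀ j, FiniteDimensional ℂ (W j)]
  {σ : ∀ j, Representation ℂ G (W j)}

theorem IsCompleteFamily.exists_repIso (hσ : IsCompleteFamily W σ) (h : IsIrreducibleRep τ) :
    ∃ j, RepIso τ (σ j) := by
  let e : U ≃ₗ[ℂ] Fin (finrank ℂ U) → ℂ := (finBasis ℂ U).equivFun
  let τ' : Representation ℂ G (Fin (finrank ℂ U) → ℂ) :=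
    (e.conjRingEquiv : (U →ₗ[ℂ] U) →* _).comp τ
  have he : RepIso τ τ' := ⟨e, fun g v => by simp [τ']⟩
  obtain ⟨j, hj⟩ := hσ.2.2.2 _ τ' (he.isIrreducibleRep h)
  exact ⟨j, he.trans hj⟩

theorem IsCompleteFamily.sum_repChar_mul_repChar_inv [Fintype G] [DecidableEq J]
    (hσ : IsCompleteFamily W σ) (i j : J) :
    ∑ g, repChar (σ i) g * repChar (σ j) g⁻¹ = if i = j then (Fintype.card G : ℂ) else 0 := by
  have := (hσ.2.1 i).isIrreducible
  have := (hσ.2.1 j).isIrreducible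
  have hG : (Nat.card G : ℂ) ≠ 0 := Nat.cast_ne_zero.2 Nat.card_pos.ne'
  let := invertibleOfNonzero hG
  have hij : Nonempty ((σ j).Equiv (σ i)) ↔ i = j := by
    rw [← repIso_iff_nonempty_equiv]
    refine ⟨fun h => ?_, fun h => h ▸ ⟨.refl ℂ _, fun _ _ => rfl⟩⟩
    exact not_not.1 fun hne => hσ.2.2.1 j i (Ne.symm hne) h
  have horth := Representation.char_orthonormal (σ i) (σ j)
  rw [inv_mul_eq_iff_eq_mul₀ hG] at horth
  simpa [hij, Representation.character, repChar, mul_ite, Nat.card_eq_fintype_card] using horth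

end Irreducible

/-- Functions on a group that are constant on conjugacy classes. -/
def IsClassFunction {G : Type*} [Group G] (φ : G → ℂ) : Prop :=
  ∀ g h, φ (h * g * h⁻¹) = φ g

/-- Every inner automorphism of `H` acts on the image of `f` as an inner automorphism of `G` does.
This holds for the identity and for the inclusion of a direct factor, and makes Schur's lemma
applicable to averages over `G` in an irreducible representation of `H`. -/
def InducesInnerAut {G H : Type*} [Group G] [Group H] (f : G →* H) : Prop :=
  ∀ x : H, ∃ c : G, ∀ g, x * f g * x⁻¹ = f (c * g * c⁻¹)

/-- The normalized character `χ_ρ(g) / dim ρ`. -/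
def charRatio {G V : Type*} [Group G] [AddCommGroup V] [Module ℂ V]
    (ρ : Representation ℂ G V) (g : G) : ℂ :=
  repChar ρ g / finrank ℂ V

section ClassFunction

variable {G V : Type*} [Group G] [AddCommGroup V] [Module ℂ V]

theorem isClassFunction_repChar (ρ : Representation ℂ G V) : IsClassFunction (repChar ρ) :=
  fun g h => repChar_conj ρ g h

theorem IsClassFunction.comp_inv {φ : G → ℂ} (hφ : IsClassFunction φ) :
    IsClassFunction fun g => φ g⁻¹ := fun g h => by
  simpa only [show (h * g * h⁻¹)⁻¹ = h * g⁻¹ * h⁻¹ by group] using hφ g⁻¹ h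

end ClassFunction

section Averaging

variable {G H V : Type*} [Group G] [Group H] [AddCommGroup V] [Module ℂ V]
  [FiniteDimensional ℂ V] {ρ : Representation ℂ H V} {f : G →* H}

theorem inducesInnerAut_id : InducesInnerAut (MonoidHom.id G) :=
  fun x => ⟨x, fun _ => rfl⟩

theorem IsIrreducibleRep.sum_smul_eq_smul_one [Fintype G] (hρ : IsIrreducibleRep ρ)
    (hf : InducesInnerAut f) {φ : G → ℂ} (hφ : IsClassFunction φ) :
    ∑ g, φ g • (ρ (f g) : V →ₗ[ℂ] V) =
      ((∑ g, φ g * repChar ρ (f g)) / finrank ℂ V) • (1 : V →ₗ[ℂ] V) := by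
  have hcomm : ∀ x, (∑ g, φ g • (ρ (f g) : V →ₗ[ℂ] V)) * ρ x =
      ρ x * ∑ g, φ g • (ρ (f g) : V →ₗ[ℂ] V) := by
    intro x
    obtain ⟨c, hc⟩ := hf x
    rw [Finset.sum_mul, Finset.mul_sum]
    refine (Fintype.sum_equiv (MulAut.conj c).toEquiv _ _ fun g => ?_).symm
    have hx : f (c * g * c⁻¹) * x = x * f g := by rw [← hc, inv_mul_cancel_right]
    simp [hφ g c, ← map_mul, hx]
  rw [hρ.eq_trace_div_finrank_smul_one hcomm]
  simp [repChar]

variable {M : Finset G} {m₀ : G}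

theorem IsIrreducibleRep.sum_conjClass_eq_smul_one [Finite G] (hρ : IsIrreducibleRep ρ)
    (hf : InducesInnerAut f) (hM : ∀ m, m ∈ M ↔ IsConj m₀ m) :
    ∑ m ∈ M, (ρ (f m) : V →ₗ[ℂ] V) = (M.card * charRatio ρ (f m₀)) • (1 : V →ₗ[ℂ] V) := by
  classical
  have := Fintype.ofFinite G
  have hclass : IsClassFunction fun g => if g ∈ M then (1 : ℂ) else 0 := fun g h => by
    have : IsConj m₀ (h * g * h⁻¹) ↔ IsConj m₀ g := by
      have hg : IsConj g (h * g * h⁻¹) := isConj_iff.2 ⟨h, rfl⟩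
      exact ⟨fun h => h.trans hg.symm, fun h => h.trans hg⟩
    simp only [hM, this]
  have hchar : ∀ m ∈ M, repChar ρ (f m) = repChar ρ (f m₀) := fun m hm => by
    obtain ⟨c, rfl⟩ := isConj_iff.1 ((hM m).1 hm)
    simp only [map_mul, map_inv, repChar_conj]
  have hsum := hρ.sum_smul_eq_smul_one hf hclass
  simp only [ite_smul, one_smul, zero_smul, ite_mul, one_mul, zero_mul, Finset.sum_ite_mem,
    Finset.univ_inter] at hsum
  rw [hsum, Finset.sum_congr rfl hchar, Finset.sum_const, nsmul_eq_mul, mul_div_assoc, charRatio]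

theorem IsIrreducibleRep.charRatio_mul_of_commute [Finite G] (hρ : IsIrreducibleRep ρ)
    (hf : InducesInnerAut f) (m : G) {y : H} (hy : ∀ c, Commute (f c) y) :
    charRatio ρ (f m * y) = charRatio ρ (f m) * charRatio ρ y := by
  classical
  have := Fintype.ofFinite G
  set M : Finset G := {m' | IsConj m m'} with hMdef
  have hM : ∀ m', m' ∈ M ↔ IsConj m m' := fun m' => by simp [hMdef]
  have hcard : (M.card : ℂ) ≠ 0 :=
    Nat.cast_ne_zero.2 (Finset.card_ne_zero_of_mem ((hM m).2 (IsConj.refl m)))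
  have hconj : ∀ m' ∈ M, repChar ρ (f m' * y) = repChar ρ (f m * y) := fun m' hm' => by
    obtain ⟨c, rfl⟩ := isConj_iff.1 ((hM m').1 hm')
    rw [← repChar_conj ρ (f m * y) (f c)]
    congr 1
    simp only [map_mul, map_inv, mul_assoc, ((hy c).inv_left).eq]
  have hsum : ∑ m' ∈ M, repChar ρ (f m' * y) = M.card * charRatio ρ (f m) * repChar ρ y := by
    have htrace := congrArg (fun A => LinearMap.trace ℂ V (A * ρ y))
      (hρ.sum_conjClass_eq_smul_one hf hM)
    simpa [Finset.sum_mul, ← map_mul, repChar] using htrace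
  rw [Finset.sum_congr rfl hconj, Finset.sum_const, nsmul_eq_mul, mul_assoc] at hsum
  rw [charRatio, mul_left_cancel₀ hcard hsum, mul_div_assoc]
  rfl

end Averaging

section Fourier

/-- The Fourier transform `∑ φ(g) ρ(g⁻¹)` of a function `φ` at a representation `ρ`. The inverse
makes the transform of a positive definite function a positive operator. -/
def fourierTransform {G V : Type*} [Group G] [Fintype G] [AddCommGroup V] [Module ℂ V]
    (φ : G → ℂ) (ρ : Representation ℂ G V) : V →ₗ[ℂ] V :=
  ∑ g, φ g • ρ g⁻¹

variable {G V : Type*} [Group G] [Fintype G] [AddCommGroup V] [Module ℂ V]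
  {J : Type*} {W : J → Type*} [∀ j, NormedAddCommGroup (W j)]
  [∀ j, InnerProductSpace ℂ (W j)] [∀ j, FiniteDimensional ℂ (W j)]
  {σ : ∀ j, Representation ℂ G (W j)}

theorem IsClassFunction.sum_smul_eq_zero (hσ : IsCompleteFamily W σ) {φ : G → ℂ}
    (hφ : IsClassFunction φ) (h : ∀ j, ∑ g, φ g * repChar (σ j) g = 0)
    [FiniteDimensional ℂ V] (ρ : Representation ℂ G V) :
    ∑ g, φ g • (ρ g : V →ₗ[ℂ] V) = 0 := by
  set A : V →ₗ[ℂ] V := ∑ g, φ g • ρ g with hA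
  have hAρ : ∀ x v, A (ρ x v) = ρ x (A v) := fun x v => by
    simp only [hA, LinearMap.sum_apply, LinearMap.smul_apply, map_sum, map_smul]
    refine (Fintype.sum_equiv (MulAut.conj x).toEquiv _ _ fun g => ?_).symm
    simp [hφ g x, ← Module.End.mul_apply, ← map_mul]
  let K : Subrepresentation ρ := ⟨LinearMap.ker A, fun g v hv => by
    rw [LinearMap.mem_ker] at hv ⊢
    rw [hAρ, hv, map_zero]⟩
  have hK : K = ⊤ := subrepresentation_eq_top_of_forall_isAtom_le fun S hS v hv => by
    have hirr := isIrreducibleRep_toRepresentation_of_isAtom hS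
    obtain ⟨j, hj⟩ := hσ.exists_repIso hirr
    have hzero := hirr.sum_smul_eq_smul_one inducesInnerAut_id hφ
    simp only [MonoidHom.id_apply, hj.repChar_eq, h j, zero_div, zero_smul] at hzero
    have hval := congrArg Subtype.val (LinearMap.congr_fun hzero ⟨v, hv⟩)
    have hker : A v = 0 := by simpa [hA, Subrepresentation.toRepresentation] using hval
    exact hker
  exact LinearMap.ker_eq_top.1 (congrArg Subrepresentation.toSubmodule hK)

theorem IsClassFunction.eq_zero (hσ : IsCompleteFamily W σ) {φ : G → ℂ}
    (hφ : IsClassFunction φ) (h : ∀ j, ∑ g, φ g * repChar (σ j) g = 0) : φ = 0 := by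
  classical
  have hreg := LinearMap.congr_fun
    (hφ.sum_smul_eq_zero hσ h (Representation.leftRegular ℂ G)) (MonoidAlgebra.single 1 1)
  ext x
  have hx := congrArg (fun a => a.coeff x) hreg
  simpa [Finsupp.single_apply, LinearMap.sum_apply] using hx

theorem trace_fourierTransform_mul (φ : G → ℂ) (ρ : Representation ℂ G V) (x : G) :
    LinearMap.trace ℂ V (fourierTransform φ ρ * ρ x) = ∑ g, φ g * repChar ρ (g⁻¹ * x) := by
  simp [fourierTransform, Finset.sum_mul, repChar]

theorem trace_fourierTransform (φ : G → ℂ) (ρ : Representation ℂ G V) :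
    LinearMap.trace ℂ V (fourierTransform φ ρ) = ∑ g, φ g * repChar ρ g⁻¹ := by
  simpa using trace_fourierTransform_mul φ ρ 1

theorem trace_fourierTransform_repChar_comm {U : Type*} [AddCommGroup U] [Module ℂ U]
    (ρ : Representation ℂ G V) (τ : Representation ℂ G U) :
    LinearMap.trace ℂ U (fourierTransform (repChar ρ) τ) =
      LinearMap.trace ℂ V (fourierTransform (repChar τ) ρ) := by
  rw [trace_fourierTransform, trace_fourierTransform]
  exact Fintype.sum_equiv (Equiv.inv G) _ _ fun g => by simp [mul_comm]

theorem IsIrreducibleRep.fourierTransform_comp_eq_smul_one {H : Type*} [Group H]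
    [FiniteDimensional ℂ V] {ρ : Representation ℂ H V} {f : G →* H} (hρ : IsIrreducibleRep ρ)
    (hf : InducesInnerAut f) {φ : G → ℂ} (hφ : IsClassFunction φ) :
    fourierTransform φ (ρ.comp f) =
      (LinearMap.trace ℂ V (fourierTransform φ (ρ.comp f)) / finrank ℂ V) • 1 := by
  have hsum : fourierTransform φ (ρ.comp f) = ∑ g, φ g⁻¹ • (ρ (f g) : V →ₗ[ℂ] V) :=
    Fintype.sum_equiv (Equiv.inv G) _ _ fun g => by simp
  rw [hsum, hρ.sum_smul_eq_smul_one hf hφ.comp_inv]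
  simp [hρ.finrank_pos.ne']

theorem IsCompleteFamily.fourierTransform_repChar_self (hσ : IsCompleteFamily W σ) (j : J) :
    fourierTransform (repChar (σ j)) (σ j) =
      (Fintype.card G / finrank ℂ (W j) : ℂ) • (1 : W j →ₗ[ℂ] W j) := by
  classical
  have hscalar := (hσ.2.1 j).fourierTransform_comp_eq_smul_one inducesInnerAut_id
    (isClassFunction_repChar (σ j))
  have hid : (σ j).comp (MonoidHom.id G) = σ j := MonoidHom.comp_id _
  rw [hid, trace_fourierTransform, hσ.sum_repChar_mul_repChar_inv, if_pos rfl] at hscalar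
  exact hscalar

theorem IsCompleteFamily.sum_repChar_mul_repChar_inv_mul (hσ : IsCompleteFamily W σ) (j : J)
    (x : G) : ∑ g, repChar (σ j) g * repChar (σ j) (g⁻¹ * x) =
      Fintype.card G / finrank ℂ (W j) * repChar (σ j) x := by
  rw [← trace_fourierTransform_mul, hσ.fourierTransform_repChar_self]
  simp [repChar]

theorem IsCompleteFamily.fourierTransform_repChar_mul_self (hσ : IsCompleteFamily W σ) (j : J)
    (ρ : Representation ℂ G V) :
    fourierTransform (repChar (σ j)) ρ * fourierTransform (repChar (σ j)) ρ =
      (Fintype.card G / finrank ℂ (W j) : ℂ) • fourierTransform (repChar (σ j)) ρ := by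
  calc fourierTransform (repChar (σ j)) ρ * fourierTransform (repChar (σ j)) ρ
      = ∑ g, ∑ x, (repChar (σ j) g * repChar (σ j) (g⁻¹ * x)) • (ρ x⁻¹ : V →ₗ[ℂ] V) := by
        rw [fourierTransform, Finset.sum_mul_sum, Finset.sum_comm]
        refine Finset.sum_congr rfl fun g _ => ?_
        refine Fintype.sum_equiv (Equiv.mulLeft g) _ _ fun h => ?_
        simp [smul_smul, ← map_mul]
    _ = (Fintype.card G / finrank ℂ (W j) : ℂ) • fourierTransform (repChar (σ j)) ρ := by
        rw [Finset.sum_comm, fourierTransform, Finset.smul_sum]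
        simp only [← Finset.sum_smul, hσ.sum_repChar_mul_repChar_inv_mul, smul_smul]

variable [Fintype J]

theorem IsCompleteFamily.sum_finrank_mul_repChar [DecidableEq G] (hσ : IsCompleteFamily W σ)
    (x : G) :
    ∑ j, (finrank ℂ (W j) : ℂ) * repChar (σ j) x = if x = 1 then (Fintype.card G : ℂ) else 0 := by
  classical
  let φ : G → ℂ := fun g => ∑ j, (finrank ℂ (W j) : ℂ) * repChar (σ j) g⁻¹ -
    if g = 1 then (Fintype.card G : ℂ) else 0
  have hclass : IsClassFunction φ := fun g h => by
    have hconj : (h * g * h⁻¹)⁻¹ = h * g⁻¹ * h⁻¹ := by group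
    simp [φ, hconj, repChar_conj]
  have horth : ∀ i, ∑ g, φ g * repChar (σ i) g = 0 := fun i => by
    simp only [φ, sub_mul, Finset.sum_sub_distrib, Finset.sum_mul, ite_mul, zero_mul,
      Finset.sum_ite_eq', Finset.mem_univ, if_true]
    rw [Finset.sum_comm]
    simp only [mul_assoc, mul_comm (repChar (σ _) _⁻¹), ← Finset.mul_sum,
      hσ.sum_repChar_mul_repChar_inv, repChar_one]
    simp [mul_comm]
  have hzero := congrFun (hclass.eq_zero hσ horth) x⁻¹
  simpa [φ, sub_eq_zero] using hzero

theorem IsCompleteFamily.fourier_inversion (hσ : IsCompleteFamily W σ) (φ : G → ℂ) (x : G) :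
    ∑ j, (finrank ℂ (W j) : ℂ) * LinearMap.trace ℂ (W j) (fourierTransform φ (σ j) * σ j x) =
      Fintype.card G * φ x := by
  classical
  simp only [trace_fourierTransform_mul, Finset.mul_sum, mul_left_comm _ (φ _)]
  rw [Finset.sum_comm]
  simp only [← Finset.mul_sum, hσ.sum_finrank_mul_repChar, inv_mul_eq_one]
  simp [mul_comm]

theorem IsCompleteFamily.parseval (hσ : IsCompleteFamily W σ) (φ ψ : G → ℂ) :
    ∑ j, (finrank ℂ (W j) : ℂ) *
        LinearMap.trace ℂ (W j) (fourierTransform φ (σ j) * fourierTransform ψ (σ j)) =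
      Fintype.card G * ∑ g, φ g⁻¹ * ψ g := by
  simp only [fun j => show fourierTransform ψ (σ j) = ∑ g, ψ g • σ j g⁻¹ from rfl,
    Finset.mul_sum, mul_smul_comm, map_sum, map_smul, smul_eq_mul, mul_left_comm _ (ψ _)]
  rw [Finset.sum_comm]
  simp only [← Finset.mul_sum, hσ.fourier_inversion]
  rw [Finset.mul_sum]
  exact Finset.sum_congr rfl fun g _ => by ring

theorem IsCompleteFamily.sum_conjClass {M : Finset G} {m₀ : G} (hσ : IsCompleteFamily W σ)
    (hM : ∀ m, m ∈ M ↔ IsConj m₀ m) (φ : G → ℂ) :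
    Fintype.card G * ∑ m ∈ M, φ m =
      M.card * ∑ j, repChar (σ j) m₀ * LinearMap.trace ℂ (W j) (fourierTransform φ (σ j)) := by
  have havg : ∀ j, (finrank ℂ (W j) : ℂ) *
      LinearMap.trace ℂ (W j) (fourierTransform φ (σ j) * ∑ m ∈ M, σ j m) =
      M.card * (repChar (σ j) m₀ * LinearMap.trace ℂ (W j) (fourierTransform φ (σ j))) := by
    intro j
    have hd : (finrank ℂ (W j) : ℂ) ≠ 0 := by exact_mod_cast (hσ.2.1 j).finrank_pos.ne'
    have hscalar := (hσ.2.1 j).sum_conjClass_eq_smul_one inducesInnerAut_id hM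
    simp only [MonoidHom.id_apply] at hscalar
    rw [hscalar, mul_smul_comm, mul_one, map_smul, smul_eq_mul, charRatio]
    field_simp
  rw [Finset.mul_sum, Finset.mul_sum, ← Finset.sum_congr rfl fun j _ => havg j]
  simp only [← hσ.fourier_inversion, Finset.mul_sum, map_sum]
  exact Finset.sum_comm

end Fourier

section PositiveDefinite

open scoped ComplexOrder

/-- Positive definite functions on a group: those `φ` for which all the matrices `φ(g⁻¹h)` are
positive semidefinite. -/
def IsPositiveDefinite {G : Type*} [Group G] (φ : G → ℂ) : Prop :=
  (Matrix.of fun g h => φ (g⁻¹ * h)).PosSemidef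

variable {G V : Type*} [Group G] [NormedAddCommGroup V] [InnerProductSpace ℂ V]
  {ρ : Representation ℂ G V} {φ ψ : G → ℂ}

theorem IsUnitaryRep.inner_map_inv_left (hρ : IsUnitaryRep ρ) (g : G) (v w : V) :
    ⟪ρ g⁻¹ v, w⟫_ℂ = ⟪v, ρ g w⟫_ℂ := by
  rw [← hρ g]
  simp

theorem IsUnitaryRep.norm_map (hρ : IsUnitaryRep ρ) (g : G) (v : V) : ‖ρ g v‖ = ‖v‖ :=
  (LinearMap.norm_map_iff_inner_map_map (ρ g)).2 (hρ g) v

theorem isPositiveDefinite_inner [Finite G] (hρ : IsUnitaryRep ρ) (v : V) :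
    IsPositiveDefinite fun g => ⟪v, ρ g v⟫_ℂ := by
  have hgram : (Matrix.of fun g h => ⟪v, ρ (g⁻¹ * h) v⟫_ℂ) = Matrix.gram ℂ fun g => ρ g v := by
    ext g h
    rw [Matrix.of_apply, Matrix.gram_apply, map_mul, Module.End.mul_apply, ← hρ g]
    simp
  rw [IsPositiveDefinite, hgram]
  exact Matrix.posSemidef_gram ℂ _

theorem IsPositiveDefinite.map_inv (hφ : IsPositiveDefinite φ) (g : G) :
    φ g⁻¹ = starRingEnd ℂ (φ g) := by
  simpa using (hφ.isHermitian.apply g 1).symm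

theorem IsPositiveDefinite.conj (hφ : IsPositiveDefinite φ) :
    IsPositiveDefinite fun g => starRingEnd ℂ (φ g) := by
  have htranspose : (Matrix.of fun g h => starRingEnd ℂ (φ (g⁻¹ * h))) =
      (Matrix.of fun g h => φ (g⁻¹ * h)).transpose := by
    ext g h
    simp [← hφ.map_inv]
  rw [IsPositiveDefinite, htranspose]
  exact Matrix.PosSemidef.transpose hφ

theorem IsPositiveDefinite.mul (hφ : IsPositiveDefinite φ) (hψ : IsPositiveDefinite ψ) :
    IsPositiveDefinite fun g => φ g * ψ g :=
  Matrix.PosSemidef.hadamard hφ hψ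

theorem IsPositiveDefinite.map_one_nonneg (hφ : IsPositiveDefinite φ) : 0 ≤ φ 1 := by
  simpa using hφ.diag_nonneg (i := 1)

theorem IsPositiveDefinite.sum_nonneg [Fintype G] (hφ : IsPositiveDefinite φ) : 0 ≤ ∑ g, φ g := by
  have hquad : 0 ≤ (Fintype.card G : ℂ) * ∑ g, φ g := by
    have hinner : ∀ g, ∑ h, φ (g⁻¹ * h) = ∑ h, φ h := fun g =>
      Fintype.sum_equiv (Equiv.mulLeft g⁻¹) _ _ fun h => rfl
    simpa [dotProduct, Matrix.mulVec, hinner] using hφ.dotProduct_mulVec_nonneg fun _ => 1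
  have hinv : (0 : ℂ) ≤ (Fintype.card G : ℂ)⁻¹ := by positivity
  simpa using mul_nonneg hinv hquad

theorem IsPositiveDefinite.isPositive_fourierTransform [Fintype G] (hφ : IsPositiveDefinite φ)
    (hρ : IsUnitaryRep ρ) : (fourierTransform φ ρ).IsPositive := by
  refine (LinearMap.isPositive_iff_complex _).2 fun v => ?_
  have hv : ⟪fourierTransform φ ρ v, v⟫_ℂ = ∑ g, starRingEnd ℂ (φ g) * ⟪v, ρ g v⟫_ℂ := by
    simp [fourierTransform, hρ.inner_map_inv_left, mul_comm]
  have hnonneg := (hφ.conj.mul (isPositiveDefinite_inner hρ v)).sum_nonneg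
  rw [hv]
  exact ⟨(Complex.eq_re_of_ofReal_le hnonneg).symm, (Complex.nonneg_iff.1 hnonneg).1⟩

theorem repChar_eq_sum_inner {ι : Type*} [Fintype ι] (b : OrthonormalBasis ι ℂ V)
    (ρ : Representation ℂ G V) (g : G) : repChar ρ g = ∑ x, ⟪b x, ρ g (b x)⟫_ℂ :=
  LinearMap.trace_eq_sum_inner _ b

variable [FiniteDimensional ℂ V]

theorem IsUnitaryRep.norm_repChar_le (hρ : IsUnitaryRep ρ) (g : G) :
    ‖repChar ρ g‖ ≤ finrank ℂ V := by
  rw [repChar_eq_sum_inner (stdOrthonormalBasis ℂ V)]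
  calc ‖∑ x, ⟪stdOrthonormalBasis ℂ V x, ρ g (stdOrthonormalBasis ℂ V x)⟫_ℂ‖
      ≤ ∑ _x : Fin (finrank ℂ V), (1 : ℝ) := norm_sum_le_of_le _ fun x _ => by
        simpa [hρ.norm_map] using norm_inner_le_norm (𝕜 := ℂ) (stdOrthonormalBasis ℂ V x)
          (ρ g (stdOrthonormalBasis ℂ V x))
    _ = finrank ℂ V := by simp

theorem isPositiveDefinite_repChar [Finite G] (hρ : IsUnitaryRep ρ) :
    IsPositiveDefinite (repChar ρ) := by
  have hsum : (Matrix.of fun g h => repChar ρ (g⁻¹ * h)) =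
      ∑ x, Matrix.of fun g h => ⟪stdOrthonormalBasis ℂ V x,
        ρ (g⁻¹ * h) (stdOrthonormalBasis ℂ V x)⟫_ℂ := by
    ext g h
    simp [Matrix.sum_apply, repChar_eq_sum_inner (stdOrthonormalBasis ℂ V)]
  rw [IsPositiveDefinite, hsum]
  exact Matrix.posSemidef_sum _ fun x _ => isPositiveDefinite_inner hρ _

theorem re_trace_mul_self_le_sq_of_isPositive {A : V →ₗ[ℂ] V} (hA : A.IsPositive) :
    (LinearMap.trace ℂ V (A * A)).re ≤ (LinearMap.trace ℂ V A).re ^ 2 := by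
  have hsymm := hA.isSymmetric
  let b := hsymm.eigenvectorBasis rfl
  have hsq : LinearMap.trace ℂ V (A * A) = ∑ i, (hsymm.eigenvalues rfl i : ℂ) ^ 2 := by
    rw [LinearMap.trace_eq_sum_inner _ b]
    refine Finset.sum_congr rfl fun i _ => ?_
    simp [b, hsymm.apply_eigenvectorBasis, sq]
  rw [hsq, hsymm.trace_eq_sum_eigenvalues rfl]
  simpa [← Complex.ofReal_pow, ← Complex.ofReal_sum] using
    Finset.sum_sq_le_sq_sum_of_nonneg fun i _ => hA.nonneg_eigenvalues rfl i

end PositiveDefinite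

/-- The weight `(dim τ / |G|) ∑ Re (φ(g) χ_τ(g⁻¹))` that a positive definite function `φ` gives to
the irreducible representation `τ`: the squared norm of the `τ`-isotypic component of `v` when
`φ` is a matrix coefficient `⟪v, ρ(g) v⟫`. -/
def isotypicWeight {G U : Type*} [Group G] [Fintype G] [AddCommGroup U] [Module ℂ U]
    (τ : Representation ℂ G U) (φ : G → ℂ) : ℝ :=
  finrank ℂ U / Fintype.card G * (LinearMap.trace ℂ U (fourierTransform φ τ)).re

section ConjugacyClassAverages

open scoped ComplexOrder

variable {G U V ι : Type*} [Group G] [Fintype G] [NormedAddCommGroup U] [InnerProductSpace ℂ U]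
  {τ : Representation ℂ G U} [NormedAddCommGroup V]
  [InnerProductSpace ℂ V] {ρ : Representation ℂ G V} [Fintype ι]
  {φ f : G → ℂ} {J : Type*} {W : J → Type*} [∀ j, NormedAddCommGroup (W j)]
  [∀ j, InnerProductSpace ℂ (W j)] [∀ j, FiniteDimensional ℂ (W j)]
  {σ : ∀ j, Representation ℂ G (W j)} {M : Finset G} {m₀ : G} {Λ : Finset J} {lam : ℝ}

theorem IsPositiveDefinite.trace_fourierTransform_nonneg [FiniteDimensional ℂ U]
    (hφ : IsPositiveDefinite φ) (hτ : IsUnitaryRep τ) :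
    0 ≤ LinearMap.trace ℂ U (fourierTransform φ τ) :=
  (hφ.isPositive_fourierTransform hτ).trace_nonneg

theorem IsPositiveDefinite.isotypicWeight_nonneg [FiniteDimensional ℂ U]
    (hφ : IsPositiveDefinite φ) (hτ : IsUnitaryRep τ) : 0 ≤ isotypicWeight τ φ :=
  mul_nonneg (by positivity) (Complex.nonneg_iff.1 (hφ.trace_fourierTransform_nonneg hτ)).1

theorem IsCompleteFamily.sum_isotypicWeight [Fintype J] (hσ : IsCompleteFamily W σ) (φ : G → ℂ) :
    ∑ j, isotypicWeight (σ j) φ = (φ 1).re := by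
  have hG : (Fintype.card G : ℝ) ≠ 0 := by positivity
  have hinv : ∑ j, finrank ℂ (W j) * (LinearMap.trace ℂ (W j) (fourierTransform φ (σ j))).re =
      Fintype.card G * (φ 1).re := by
    simpa using congrArg Complex.re (hσ.fourier_inversion φ 1)
  rw [← mul_right_inj' hG, ← hinv, Finset.mul_sum]
  refine Finset.sum_congr rfl fun j _ => ?_
  rw [isotypicWeight]
  field_simp

theorem IsPositiveDefinite.norm_sum_conjClass_le [Finite J] (hφ : IsPositiveDefinite φ)
    (hσ : IsCompleteFamily W σ) (hM : ∀ m, m ∈ M ↔ IsConj m₀ m) (hlam : 0 ≤ lam)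
    (hΛ : ∀ j ∉ Λ, ‖repChar (σ j) m₀‖ ≤ lam * finrank ℂ (W j)) :
    ‖∑ m ∈ M, φ m‖ ≤ M.card * (lam * (φ 1).re + ∑ j ∈ Λ, isotypicWeight (σ j) φ) := by
  classical
  have := Fintype.ofFinite J
  have hG : (0 : ℝ) < Fintype.card G := by positivity
  have hterm : ∀ j, ‖repChar (σ j) m₀ * LinearMap.trace ℂ (W j) (fourierTransform φ (σ j))‖ ≤
      Fintype.card G * (lam * isotypicWeight (σ j) φ +
        if j ∈ Λ then isotypicWeight (σ j) φ else 0) := by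
    intro j
    have hw := hφ.isotypicWeight_nonneg (hσ.1 j)
    obtain ⟨htr, him⟩ := Complex.nonneg_iff.1 (hφ.trace_fourierTransform_nonneg (hσ.1 j))
    have hchar : ‖repChar (σ j) m₀‖ * (LinearMap.trace ℂ (W j) (fourierTransform φ (σ j))).re ≤
        (if j ∈ Λ then 1 else lam) * (Fintype.card G * isotypicWeight (σ j) φ) := by
      have hle : ‖repChar (σ j) m₀‖ ≤ (if j ∈ Λ then 1 else lam) * finrank ℂ (W j) := by
        split_ifs with hj
        · simpa using (hσ.1 j).norm_repChar_le m₀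
        · exact hΛ j hj
      refine (mul_le_mul_of_nonneg_right hle htr).trans_eq ?_
      rw [isotypicWeight]
      field_simp
    rw [norm_mul, ← Complex.abs_re_eq_norm.2 him.symm, abs_of_nonneg htr]
    refine hchar.trans ?_
    split_ifs <;> nlinarith [mul_nonneg hG.le (mul_nonneg hlam hw)]
  have hsum := congrArg norm (hσ.sum_conjClass hM φ)
  rw [norm_mul, norm_mul, Complex.norm_natCast, Complex.norm_natCast] at hsum
  refine le_of_mul_le_mul_left ?_ hG
  calc Fintype.card G * ‖∑ m ∈ M, φ m‖
      ≤ M.card * ∑ j, Fintype.card G * (lam * isotypicWeight (σ j) φ +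
          if j ∈ Λ then isotypicWeight (σ j) φ else 0) :=
        hsum.trans_le (mul_le_mul_of_nonneg_left
          (norm_sum_le_of_le _ fun j _ => hterm j) (by positivity))
    _ = Fintype.card G * (M.card * (lam * (φ 1).re + ∑ j ∈ Λ, isotypicWeight (σ j) φ)) := by
        rw [← Finset.mul_sum, Finset.sum_add_distrib, ← Finset.mul_sum, hσ.sum_isotypicWeight,
          Finset.sum_ite_mem, Finset.univ_inter, mul_left_comm]

theorem IsUnitaryRep.isotypicWeight_le [FiniteDimensional ℂ U] (hτ : IsUnitaryRep τ) (φ : G → ℂ) :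
    isotypicWeight τ φ ≤ (finrank ℂ U : ℝ) ^ 2 / Fintype.card G * ∑ g, ‖φ g‖ := by
  have htr : (LinearMap.trace ℂ U (fourierTransform φ τ)).re ≤ finrank ℂ U * ∑ g, ‖φ g‖ := by
    rw [trace_fourierTransform, Finset.mul_sum]
    refine (Complex.re_le_norm _).trans (norm_sum_le_of_le _ fun g _ => ?_)
    rw [norm_mul, mul_comm]
    exact mul_le_mul_of_nonneg_right (hτ.norm_repChar_le _) (norm_nonneg _)
  calc isotypicWeight τ φ
      ≤ finrank ℂ U / Fintype.card G * (finrank ℂ U * ∑ g, ‖φ g‖) :=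
        mul_le_mul_of_nonneg_left htr (by positivity)
    _ = (finrank ℂ U : ℝ) ^ 2 / Fintype.card G * ∑ g, ‖φ g‖ := by ring

variable [Fintype J]

theorem IsPositiveDefinite.sum_norm_sq_le (hf : IsPositiveDefinite f)
    (hσ : IsCompleteFamily W σ) :
    ∑ g, ‖f g‖ ^ 2 ≤
      (f 1).re * ∑ j, (LinearMap.trace ℂ (W j) (fourierTransform f (σ j))).re := by
  have hG : (0 : ℝ) < Fintype.card G := by positivity
  set t : J → ℝ := fun j => (LinearMap.trace ℂ (W j) (fourierTransform f (σ j))).re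
  have ht : ∀ j, 0 ≤ t j := fun j =>
    (Complex.nonneg_iff.1 (hf.trace_fourierTransform_nonneg (hσ.1 j))).1
  have hone : ∑ j, finrank ℂ (W j) * t j = Fintype.card G * (f 1).re := by
    simpa using congrArg Complex.re (hσ.fourier_inversion f 1)
  have hparseval : Fintype.card G * ∑ g, ‖f g‖ ^ 2 = ∑ j, finrank ℂ (W j) *
      (LinearMap.trace ℂ (W j) (fourierTransform f (σ j) * fourierTransform f (σ j))).re := by
    have := congrArg Complex.re (hσ.parseval f f)
    simp only [hf.map_inv, Complex.conj_mul'] at this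
    simpa [← Complex.ofReal_pow] using this.symm
  refine le_of_mul_le_mul_left ?_ hG
  calc Fintype.card G * ∑ g, ‖f g‖ ^ 2
      ≤ ∑ j, finrank ℂ (W j) * t j ^ 2 := by
        rw [hparseval]
        gcongr with j
        exact re_trace_mul_self_le_sq_of_isPositive (hf.isPositive_fourierTransform (hσ.1 j))
    _ ≤ ∑ j, finrank ℂ (W j) * (t j * ∑ i, t i) := by
        gcongr with j
        rw [sq]
        exact mul_le_mul_of_nonneg_left
          (Finset.single_le_sum (fun i _ => ht i) (Finset.mem_univ j)) (ht j)
    _ = Fintype.card G * ((f 1).re * ∑ j, t j) := by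
        simp only [← mul_assoc, ← Finset.sum_mul, hone]

theorem IsPositiveDefinite.sum_conjClass_norm_sq_le (hf : IsPositiveDefinite f)
    (hσ : IsCompleteFamily W σ) (hM : ∀ m, m ∈ M ↔ IsConj m₀ m) (hlam : 0 ≤ lam)
    (hΛ : ∀ j ∉ Λ, ‖repChar (σ j) m₀‖ ≤ lam * finrank ℂ (W j)) :
    ∑ m ∈ M, ‖f m‖ ^ 2 ≤ M.card * (lam * (f 1).re ^ 2 +
      (∑ j ∈ Λ, (finrank ℂ (W j) : ℝ) ^ 2 / Fintype.card G) *
        ((f 1).re * ∑ j, (LinearMap.trace ℂ (W j) (fourierTransform f (σ j))).re)) := by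
  set φ : G → ℂ := fun g => starRingEnd ℂ (f g) * f g
  have hnorm : ∀ g, φ g = ((‖f g‖ ^ 2 : ℝ) : ℂ) := fun g => by
    simp [φ, Complex.conj_mul']
  have hone : (φ 1).re = (f 1).re ^ 2 := by
    have := (Complex.nonneg_iff.1 hf.map_one_nonneg).2
    simp [φ, ← this, sq]
  have hbound := (hf.conj.mul hf).norm_sum_conjClass_le hσ hM hlam hΛ
  have hM_sum : ‖∑ m ∈ M, φ m‖ = ∑ m ∈ M, ‖f m‖ ^ 2 := by
    simp only [hnorm, ← Complex.ofReal_sum]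
    exact Complex.norm_of_nonneg (by positivity)
  have hweight : ∑ j ∈ Λ, isotypicWeight (σ j) φ ≤
      ∑ j ∈ Λ, (finrank ℂ (W j) : ℝ) ^ 2 / Fintype.card G * ∑ g, ‖f g‖ ^ 2 := by
    gcongr with j
    simpa [hnorm] using (hσ.1 j).isotypicWeight_le φ
  rw [← Finset.sum_mul] at hweight
  rw [← hM_sum, ← hone]
  refine hbound.trans ?_
  gcongr
  refine hweight.trans ?_
  gcongr
  exact hf.sum_norm_sq_le hσ

theorem IsUnitaryRep.sum_conjClass_sum_norm_inner_sq_le (hρ : IsUnitaryRep ρ)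
    (b : OrthonormalBasis ι ℂ V) (hσ : IsCompleteFamily W σ)
    (hM : ∀ m, m ∈ M ↔ IsConj m₀ m) (hlam : 0 ≤ lam)
    (hΛ : ∀ j ∉ Λ, ‖repChar (σ j) m₀‖ ≤ lam * finrank ℂ (W j)) :
    ∑ m ∈ M, ∑ x, ‖⟪b x, ρ m (b x)⟫_ℂ‖ ^ 2 ≤ M.card * (lam * finrank ℂ V +
      (∑ j ∈ Λ, (finrank ℂ (W j) : ℝ) ^ 2 / Fintype.card G) *
        ∑ j, (LinearMap.trace ℂ (W j) (fourierTransform (repChar ρ) (σ j))).re) := by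
  have hcoeff : ∀ x, ∑ m ∈ M, ‖⟪b x, ρ m (b x)⟫_ℂ‖ ^ 2 ≤ M.card * (lam +
      (∑ j ∈ Λ, (finrank ℂ (W j) : ℝ) ^ 2 / Fintype.card G) * ∑ j, (LinearMap.trace ℂ (W j)
        (fourierTransform (fun g => ⟪b x, ρ g (b x)⟫_ℂ) (σ j))).re) := fun x => by
    have hone : ⟪b x, ρ 1 (b x)⟫_ℂ = 1 := by simp
    simpa [hone] using
      (isPositiveDefinite_inner hρ (b x)).sum_conjClass_norm_sq_le hσ hM hlam hΛ
  have htrace : ∀ j, (LinearMap.trace ℂ (W j) (fourierTransform (repChar ρ) (σ j))).re =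
      ∑ x, (LinearMap.trace ℂ (W j)
        (fourierTransform (fun g => ⟪b x, ρ g (b x)⟫_ℂ) (σ j))).re := fun j => by
    simp only [← Complex.re_sum, trace_fourierTransform, repChar_eq_sum_inner b, Finset.sum_mul]
    rw [Finset.sum_comm]
  rw [Finset.sum_comm]
  refine (Finset.sum_le_sum fun x _ => hcoeff x).trans_eq ?_
  simp only [htrace]
  rw [← Finset.mul_sum, Finset.sum_add_distrib, ← Finset.mul_sum, Finset.sum_comm,
    finrank_eq_card_basis b.toBasis]
  simp [mul_comm]

end ConjugacyClassAverages

/-- The mean of `|⟪b x, ρ(m) b x⟫|²` over `m ∈ M` and the vectors `b x` of an orthonormal basis. -/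
def meanSqCoeff {G V ι : Type*} [Group G] [NormedAddCommGroup V] [InnerProductSpace ℂ V]
    [Fintype ι] (b : OrthonormalBasis ι ℂ V) (ρ : Representation ℂ G V) (M : Finset G) : ℝ :=
  (∑ m ∈ M, ∑ x, ‖⟪b x, ρ m (b x)⟫_ℂ‖ ^ 2) / (M.card * finrank ℂ V)

section PlancherelAverages

variable {G H U : Type*} [Group G] [Fintype G] [Group H] [Fintype H]
  [AddCommGroup U] [Module ℂ U] [FiniteDimensional ℂ U]
  {J : Type*} [Fintype J] {W : J → Type*} [∀ j, NormedAddCommGroup (W j)]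
  [∀ j, InnerProductSpace ℂ (W j)] [∀ j, FiniteDimensional ℂ (W j)]
  {σ : ∀ j, Representation ℂ G (W j)}
  {T : Type*} [Fintype T] {V : T → Type*} [∀ i, NormedAddCommGroup (V i)]
  [∀ i, InnerProductSpace ℂ (V i)] [∀ i, FiniteDimensional ℂ (V i)]
  {ρ : ∀ i, Representation ℂ H (V i)} {f : G →* H}
  {ι : T → Type*} [∀ i, Fintype (ι i)] {M : Finset G} {m₀ : G} {Λ : Finset J} {lam : ℝ}

theorem IsCompleteFamily.sum_sq_finrank_div_card (hρ : IsCompleteFamily V ρ) :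
    ∑ i, (finrank ℂ (V i) : ℝ) ^ 2 / Fintype.card H = 1 := by
  classical
  have hsq : ∑ i, (finrank ℂ (V i) : ℝ) ^ 2 = Fintype.card H := by
    have := hρ.sum_finrank_mul_repChar 1
    simp only [repChar_one, if_true, ← sq] at this
    exact_mod_cast this
  rw [← Finset.sum_div, hsq, div_self (by positivity)]

theorem IsCompleteFamily.sum_finrank_mul_trace_fourierTransform_comp (hρ : IsCompleteFamily V ρ)
    (hf : Function.Injective f) (τ : Representation ℂ G U) :
    ∑ i, (finrank ℂ (V i) : ℂ) *
        LinearMap.trace ℂ U (fourierTransform (fun g => repChar (ρ i) (f g)) τ) =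
      Fintype.card H * finrank ℂ U := by
  classical
  simp only [trace_fourierTransform, Finset.mul_sum, ← mul_assoc]
  rw [Finset.sum_comm]
  simp [← Finset.sum_mul, hρ.sum_finrank_mul_repChar, map_eq_one_iff f hf, repChar_one]

theorem IsCompleteFamily.sum_plancherel_mul_re_trace_fourierTransform_comp
    (hρ : IsCompleteFamily V ρ) (hf : Function.Injective f) (τ : Representation ℂ G U) :
    ∑ i, (finrank ℂ (V i) : ℝ) ^ 2 / Fintype.card H * ((LinearMap.trace ℂ U
        (fourierTransform (fun g => repChar (ρ i) (f g)) τ)).re / finrank ℂ (V i)) =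
      finrank ℂ U := by
  have hH : (Fintype.card H : ℝ) ≠ 0 := by positivity
  have hsum := congrArg Complex.re (hρ.sum_finrank_mul_trace_fourierTransform_comp hf τ)
  simp only [Complex.re_sum, ← Complex.ofReal_natCast, Complex.re_ofReal_mul,
    Complex.ofReal_re] at hsum
  rw [← mul_right_inj' hH, ← hsum, Finset.mul_sum]
  refine Finset.sum_congr rfl fun i _ => ?_
  have hd : (finrank ℂ (V i) : ℝ) ≠ 0 := by exact_mod_cast (hρ.2.1 i).finrank_pos.ne'
  field_simp

theorem IsUnitaryRep.meanSqCoeff_le {V ι : Type*} [NormedAddCommGroup V] [InnerProductSpace ℂ V]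
    [Fintype ι] {ρ : Representation ℂ G V} (hρ : IsUnitaryRep ρ)
    (b : OrthonormalBasis ι ℂ V) (hσ : IsCompleteFamily W σ) (hM : ∀ m, m ∈ M ↔ IsConj m₀ m)
    (hlam : 0 ≤ lam) (hΛ : ∀ j ∉ Λ, ‖repChar (σ j) m₀‖ ≤ lam * finrank ℂ (W j)) :
    meanSqCoeff b ρ M ≤ lam + (∑ j ∈ Λ, (finrank ℂ (W j) : ℝ) ^ 2 / Fintype.card G) *
      ((∑ j, (LinearMap.trace ℂ (W j) (fourierTransform (repChar ρ) (σ j))).re) /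
        finrank ℂ V) := by
  have hbound := hρ.sum_conjClass_sum_norm_inner_sq_le b hσ hM hlam hΛ
  have hM0 : (0 : ℝ) < M.card := by
    exact_mod_cast Finset.card_pos.2 ⟨m₀, (hM m₀).2 (IsConj.refl m₀)⟩
  rcases (Nat.cast_nonneg (α := ℝ) (finrank ℂ V)).eq_or_lt with hV | hV
  · simp [meanSqCoeff, ← hV, hlam]
  · rw [meanSqCoeff, div_le_iff₀ (by positivity)]
    refine hbound.trans_eq ?_
    field_simp

theorem IsCompleteFamily.sum_plancherel_mul_meanSqCoeff_le (hρ : IsCompleteFamily V ρ)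
    (hf : Function.Injective f) (b : ∀ i, OrthonormalBasis (ι i) ℂ (V i))
    (hσ : IsCompleteFamily W σ) (hM : ∀ m, m ∈ M ↔ IsConj m₀ m)
    (hlam : 0 ≤ lam) (hΛ : ∀ j ∉ Λ, ‖repChar (σ j) m₀‖ ≤ lam * finrank ℂ (W j)) :
    ∑ i, (finrank ℂ (V i) : ℝ) ^ 2 / Fintype.card H * meanSqCoeff (b i) ((ρ i).comp f) M ≤
      lam + (∑ j ∈ Λ, (finrank ℂ (W j) : ℝ) ^ 2 / Fintype.card G) *
        ∑ j, (finrank ℂ (W j) : ℝ) := by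
  have hle : ∀ i, _ := fun i =>
    IsUnitaryRep.meanSqCoeff_le (ρ := (ρ i).comp f) (fun g => hρ.1 i (f g)) (b i) hσ hM hlam hΛ
  refine (Finset.sum_le_sum fun i _ =>
    mul_le_mul_of_nonneg_left (hle i) (by positivity)).trans_eq ?_
  simp only [mul_add, Finset.sum_add_distrib, ← Finset.sum_mul, hρ.sum_sq_finrank_div_card,
    one_mul, mul_left_comm _ (Finset.sum Λ _), ← Finset.mul_sum]
  congr 2
  simp only [Finset.sum_div, Finset.mul_sum]
  rw [Finset.sum_comm]
  exact Finset.sum_congr rfl fun j _ =>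
    hρ.sum_plancherel_mul_re_trace_fourierTransform_comp hf (σ j)

theorem IsCompleteFamily.sum_plancherel_mul_sqrt_meanSqCoeff_le (hρ : IsCompleteFamily V ρ)
    (hf : Function.Injective f) (b : ∀ i, OrthonormalBasis (ι i) ℂ (V i))
    (hσ : IsCompleteFamily W σ) (hM : ∀ m, m ∈ M ↔ IsConj m₀ m)
    (hlam : 0 ≤ lam) (hΛ : ∀ j ∉ Λ, ‖repChar (σ j) m₀‖ ≤ lam * finrank ℂ (W j)) :
    ∑ i, (finrank ℂ (V i) : ℝ) ^ 2 / Fintype.card H *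
        √(meanSqCoeff (b i) ((ρ i).comp f) M) ≤
      √(lam + (∑ j ∈ Λ, (finrank ℂ (W j) : ℝ) ^ 2 / Fintype.card G) *
        ∑ j, (finrank ℂ (W j) : ℝ)) := by
  have hjensen := Real.strictConcaveOn_sqrt.concaveOn.le_map_sum
    (t := Finset.univ) (w := fun i => (finrank ℂ (V i) : ℝ) ^ 2 / Fintype.card H)
    (p := fun i => meanSqCoeff (b i) ((ρ i).comp f) M) (fun i _ => by positivity)
    hρ.sum_sq_finrank_div_card fun i _ => by rw [Set.mem_Ici, meanSqCoeff]; positivity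
  simp only [smul_eq_mul] at hjensen
  exact hjensen.trans (Real.sqrt_le_sqrt
    (hρ.sum_plancherel_mul_meanSqCoeff_le hf b hσ hM hlam hΛ))

end PlancherelAverages

section LargeCharacterRatios

variable {G H V : Type*} [Group G] [Fintype G] [Group H] [NormedAddCommGroup V]
  [InnerProductSpace ℂ V] [FiniteDimensional ℂ V] {ρ : Representation ℂ H V} {f : G →* H}
  {J : Type*} {W : J → Type*} [∀ j, NormedAddCommGroup (W j)]
  [∀ j, InnerProductSpace ℂ (W j)] [∀ j, FiniteDimensional ℂ (W j)]
  {σ : ∀ j, Representation ℂ G (W j)} {M : Finset G} {m₀ : G} {Λ : Finset J} {lam : ℝ}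

theorem IsIrreducibleRep.isotypicWeight_comp_eq_zero_or (hρ : IsIrreducibleRep ρ)
    (hf : InducesInnerAut f) (hσ : IsCompleteFamily W σ) (j : J) :
    isotypicWeight (σ j) (fun g => repChar ρ (f g)) = 0 ∨
      isotypicWeight (σ j) (fun g => repChar ρ (f g)) = finrank ℂ V := by
  have hV : (finrank ℂ V : ℂ) ≠ 0 := by exact_mod_cast hρ.finrank_pos.ne'
  have hW : (finrank ℂ (W j) : ℝ) ≠ 0 := by exact_mod_cast (hσ.2.1 j).finrank_pos.ne'
  set t := LinearMap.trace ℂ V (fourierTransform (repChar (σ j)) (ρ.comp f)) with ht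
  have hscalar : fourierTransform (repChar (σ j)) (ρ.comp f) = (t / finrank ℂ V) • 1 :=
    hρ.fourierTransform_comp_eq_smul_one hf (isClassFunction_repChar (σ j))
  have hquad : t / finrank ℂ V * t = Fintype.card G / finrank ℂ (W j) * t := by
    have hidem := hσ.fourierTransform_repChar_mul_self j (ρ.comp f)
    nth_rw 1 [hscalar] at hidem
    simpa [ht] using congrArg (LinearMap.trace ℂ V) hidem
  have hweight : isotypicWeight (σ j) (fun g => repChar ρ (f g)) =
      finrank ℂ (W j) / Fintype.card G * t.re := by
    rw [ht, ← trace_fourierTransform_repChar_comm]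
    rfl
  rw [hweight]
  refine (mul_eq_mul_right_iff.1 hquad).symm.imp (fun h => by simp [h]) fun h => ?_
  have hreal : t = ((Fintype.card G / finrank ℂ (W j) * finrank ℂ V : ℝ) : ℂ) := by
    push_cast
    exact (div_eq_iff hV).1 h
  rw [hreal, Complex.ofReal_re]
  field_simp

variable [Finite J]

theorem IsIrreducibleRep.norm_charRatio_le (hρ : IsIrreducibleRep ρ) (hu : IsUnitaryRep ρ)
    (hσ : IsCompleteFamily W σ) (hM : ∀ m, m ∈ M ↔ IsConj m₀ m)
    (hlam : 0 ≤ lam) (hΛ : ∀ j ∉ Λ, ‖repChar (σ j) m₀‖ ≤ lam * finrank ℂ (W j)) :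
    ‖charRatio ρ (f m₀)‖ ≤
      lam + ∑ j ∈ Λ, isotypicWeight (σ j) (fun g => repChar ρ (f g)) / finrank ℂ V := by
  have hd : (0 : ℝ) < finrank ℂ V := by exact_mod_cast hρ.finrank_pos
  have hM0 : (0 : ℝ) < M.card := by
    exact_mod_cast Finset.card_pos.2 ⟨m₀, (hM m₀).2 (IsConj.refl m₀)⟩
  have hpos : IsPositiveDefinite (repChar (ρ.comp f)) :=
    isPositiveDefinite_repChar fun g => hu (f g)
  have hbound := hpos.norm_sum_conjClass_le hσ hM hlam hΛ
  have hchar : ∀ m ∈ M, repChar (ρ.comp f) m = repChar ρ (f m₀) := fun m hm => by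
    obtain ⟨c, rfl⟩ := isConj_iff.1 ((hM m).1 hm)
    exact repChar_conj (ρ.comp f) m₀ c
  rw [Finset.sum_congr rfl hchar, Finset.sum_const, nsmul_eq_mul, norm_mul, Complex.norm_natCast,
    repChar_one, Complex.natCast_re] at hbound
  rw [charRatio, norm_div, Complex.norm_natCast, div_le_iff₀ hd, add_mul, ← Finset.sum_div,
    div_mul_cancel₀ _ hd.ne']
  exact le_of_mul_le_mul_left hbound hM0

theorem IsIrreducibleRep.indicator_lt_norm_charRatio_le (hρ : IsIrreducibleRep ρ)
    (hu : IsUnitaryRep ρ) (hf : InducesInnerAut f)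
    (hσ : IsCompleteFamily W σ) (hM : ∀ m, m ∈ M ↔ IsConj m₀ m)
    (hlam : 0 ≤ lam) (hΛ : ∀ j ∉ Λ, ‖repChar (σ j) m₀‖ ≤ lam * finrank ℂ (W j)) :
    (if lam < ‖charRatio ρ (f m₀)‖ then (1 : ℝ) else 0) ≤
      ∑ j ∈ Λ, isotypicWeight (σ j) (fun g => repChar ρ (f g)) / finrank ℂ V := by
  have hd : (finrank ℂ V : ℝ) ≠ 0 := by exact_mod_cast hρ.finrank_pos.ne'
  have hnonneg : ∀ j ∈ Λ,
      0 ≤ isotypicWeight (σ j) (fun g => repChar ρ (f g)) / finrank ℂ V := fun j _ => by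
    rcases hρ.isotypicWeight_comp_eq_zero_or hf hσ j with h | h <;> rw [h] <;> positivity
  split_ifs with hlarge
  · have hpos := hlarge.trans_le (hρ.norm_charRatio_le hu hσ hM hlam hΛ)
    obtain ⟨j, hj, hne⟩ := Finset.exists_ne_zero_of_sum_ne_zero (by linarith :
      ∑ j ∈ Λ, isotypicWeight (σ j) (fun g => repChar ρ (f g)) / finrank ℂ V ≠ 0)
    have hfull := (hρ.isotypicWeight_comp_eq_zero_or hf hσ j).resolve_left fun h => by
      simp [h] at hne
    calc (1 : ℝ) = isotypicWeight (σ j) (fun g => repChar ρ (f g)) / finrank ℂ V := by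
          rw [hfull, div_self hd]
      _ ≤ _ := Finset.single_le_sum hnonneg hj
  · exact Finset.sum_nonneg hnonneg

theorem IsCompleteFamily.sum_plancherel_lt_norm_charRatio_le [Fintype H] {T : Type*} [Fintype T]
    {V : T → Type*} [∀ i, NormedAddCommGroup (V i)] [∀ i, InnerProductSpace ℂ (V i)]
    [∀ i, FiniteDimensional ℂ (V i)] {ρ : ∀ i, Representation ℂ H (V i)}
    (hρ : IsCompleteFamily V ρ) (hinj : Function.Injective f) (hf : InducesInnerAut f)
    (hσ : IsCompleteFamily W σ) (hM : ∀ m, m ∈ M ↔ IsConj m₀ m)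
    (hlam : 0 ≤ lam) (hΛ : ∀ j ∉ Λ, ‖repChar (σ j) m₀‖ ≤ lam * finrank ℂ (W j)) :
    ∑ i, (finrank ℂ (V i) : ℝ) ^ 2 / Fintype.card H *
        (if lam < ‖charRatio (ρ i) (f m₀)‖ then 1 else 0) ≤
      ∑ j ∈ Λ, (finrank ℂ (W j) : ℝ) ^ 2 / Fintype.card G := by
  refine (Finset.sum_le_sum fun i _ => mul_le_mul_of_nonneg_left
    ((hρ.2.1 i).indicator_lt_norm_charRatio_le (hρ.1 i) hf hσ hM hlam hΛ)
    (by positivity)).trans_eq ?_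
  simp only [Finset.mul_sum]
  rw [Finset.sum_comm]
  refine Finset.sum_congr rfl fun j _ => ?_
  simp only [isotypicWeight, mul_div_assoc, mul_left_comm _ (_ / (Fintype.card G : ℝ)),
    ← Finset.mul_sum, hρ.sum_plancherel_mul_re_trace_fourierTransform_comp hinj]
  ring

end LargeCharacterRatios

section DirectPower

variable {G V : Type*} [Group G] [AddCommGroup V] [Module ℂ V] {k : ℕ}
  {ρ : Representation ℂ (Fin k → G) V} {m : G}

/-- The homomorphism `g ↦ g^I` from `G` to the direct power `G^k`. -/
def diagHom (I : Finset (Fin k)) : G →* (Fin k → G) where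
  toFun g := onI g I
  map_one' := by ext; simp [onI]
  map_mul' g h := by ext i; by_cases hi : i ∈ I <;> simp [onI, hi]

theorem diagHom_injective {I : Finset (Fin k)} (hI : I.Nonempty) :
    Function.Injective (diagHom I : G →* (Fin k → G)) := fun g h hgh => by
  obtain ⟨l, hl⟩ := hI
  simpa [diagHom, onI, hl] using congrFun hgh l

theorem inducesInnerAut_diagHom_singleton (l : Fin k) :
    InducesInnerAut (diagHom {l} : G →* (Fin k → G)) := fun x =>
  ⟨x l, fun g => by ext i; by_cases hi : i = l <;> simp [diagHom, onI, hi]⟩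

theorem onI_empty (g : G) : onI g (∅ : Finset (Fin k)) = 1 := by
  ext; simp [onI]

theorem onI_insert {I : Finset (Fin k)} {l : Fin k} (hl : l ∉ I) (g : G) :
    onI g (insert l I) = onI g {l} * onI g I := by
  ext i; by_cases hi : i = l <;> simp [onI, hi, hl]

theorem commute_onI_singleton {I : Finset (Fin k)} {l : Fin k} (hl : l ∉ I) (g h : G) :
    Commute (onI g {l}) (onI h I) := by
  ext i; by_cases hi : i = l <;> simp [onI, hi, hl]

theorem onI_mul_onI (hm : m * m = 1) (I I' : Finset (Fin k)) :
    onI m I * onI m I' = onI m (symmDiff I I') := by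
  ext i
  by_cases h : i ∈ I <;> by_cases h' : i ∈ I' <;> simp [onI, h, h', Finset.mem_symmDiff, hm]

theorem onI_inv (hm : m * m = 1) (I : Finset (Fin k)) : (onI m I)⁻¹ = onI m I := by
  rw [inv_eq_iff_mul_eq_one, onI_mul_onI hm, symmDiff_self]
  exact onI_empty m

theorem IsIrreducibleRep.charRatio_onI [Finite G] [FiniteDimensional ℂ V]
    (hρ : IsIrreducibleRep ρ) (m : G) (I : Finset (Fin k)) :
    charRatio ρ (onI m I) = ∏ l ∈ I, charRatio ρ (onI m {l}) := by
  induction I using Finset.induction_on with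
  | empty =>
    have hd : (finrank ℂ V : ℂ) ≠ 0 := by exact_mod_cast hρ.finrank_pos.ne'
    simp [onI_empty, charRatio, repChar_one, hd]
  | insert l I hl ih =>
    rw [onI_insert hl, Finset.prod_insert hl, ← ih]
    exact hρ.charRatio_mul_of_commute (inducesInnerAut_diagHom_singleton l) m
      fun c => commute_onI_singleton hl c m

theorem isIdempotentElem_invProj (ρ : Representation ℂ (Fin k → G) V) (hm : m * m = 1) :
    IsIdempotentElem (invProj ρ m) := by
  have htranslate : ∀ I : Finset (Fin k), ∑ I', (ρ (onI m I) : V →ₗ[ℂ] V) * ρ (onI m I') =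
      ∑ I', ρ (onI m I') := fun I =>
    Fintype.sum_equiv (symmDiff_right_involutive I).toPerm _ _ fun I' => by
      rw [← map_mul, onI_mul_onI hm]
      rfl
  rw [IsIdempotentElem, invProj, smul_mul_smul_comm, Finset.sum_mul_sum,
    Finset.sum_congr rfl fun I _ => htranslate I, Finset.sum_const, Finset.card_univ,
    Fintype.card_finset, Fintype.card_fin, ← Nat.cast_smul_eq_nsmul ℂ, smul_smul]
  congr 1
  push_cast
  field_simp

variable [FiniteDimensional ℂ V]

theorem finrank_range_invProj (ρ : Representation ℂ (Fin k → G) V) (hm : m * m = 1) :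
    (finrank ℂ (LinearMap.range (invProj ρ m)) : ℂ) =
      (2 ^ k)⁻¹ * ∑ I : Finset (Fin k), repChar ρ (onI m I) := by
  rw [← (LinearMap.IsIdempotentElem.isProj_range _ (isIdempotentElem_invProj ρ hm)).trace]
  simp [invProj, repChar]

theorem finrank_range_invProj_div_finrank (ρ : Representation ℂ (Fin k → G) V)
    (hm : m * m = 1) :
    (finrank ℂ (LinearMap.range (invProj ρ m)) : ℂ) / finrank ℂ V =
      (2 ^ k)⁻¹ * ∑ I : Finset (Fin k), charRatio ρ (onI m I) := by
  rw [finrank_range_invProj ρ hm, mul_div_assoc, Finset.sum_div]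
  rfl

theorem IsIrreducibleRep.le_finrank_range_invProj [Finite G] (hρ : IsIrreducibleRep ρ)
    (hm : m * m = 1) {lam : ℝ} (hlam : lam ≤ 1)
    (hgood : ∀ l, ‖charRatio ρ (onI m {l})‖ ≤ lam) :
    (2 ^ k)⁻¹ * (1 - lam) ^ k ≤
      (finrank ℂ (LinearMap.range (invProj ρ m)) : ℝ) / finrank ℂ V := by
  have hprod : (finrank ℂ (LinearMap.range (invProj ρ m)) : ℂ) / finrank ℂ V =
      (2 ^ k)⁻¹ * ∏ l, (1 + charRatio ρ (onI m {l})) := by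
    rw [finrank_range_invProj_div_finrank ρ hm, Finset.prod_one_add, Finset.powerset_univ,
      Finset.sum_congr rfl fun I _ => hρ.charRatio_onI m I]
  have hfactor : ∀ l, 1 - lam ≤ ‖1 + charRatio ρ (onI m {l})‖ := fun l => by
    have := norm_sub_le_norm_add (1 : ℂ) (charRatio ρ (onI m {l}))
    rw [norm_one] at this
    linarith [hgood l]
  have hnorm := congrArg norm hprod
  rw [norm_div, norm_mul, norm_prod, norm_inv, norm_pow, Complex.norm_natCast,
    Complex.norm_natCast, Complex.norm_ofNat] at hnorm
  calc (2 ^ k)⁻¹ * (1 - lam) ^ k = (2 ^ k)⁻¹ * ∏ _l : Fin k, (1 - lam) := by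
        rw [Fin.prod_const]
    _ ≤ (2 ^ k)⁻¹ * ∏ l, ‖1 + charRatio ρ (onI m {l})‖ := by
        gcongr with l
        exact hfactor l
    _ = _ := hnorm.symm

end DirectPower

section UnitaryInvProj

variable {G V ι : Type*} [Group G] [NormedAddCommGroup V] [InnerProductSpace ℂ V] {k : ℕ}
  {ρ : Representation ℂ (Fin k → G) V} {m : G}

theorem IsUnitaryRep.isSymmetricProjection_invProj (hρ : IsUnitaryRep ρ) (hm : m * m = 1) :
    (invProj ρ m).IsSymmetricProjection where
  isIdempotentElem := isIdempotentElem_invProj ρ hm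
  isSymmetric v w := by
    have hterm : ∀ I, ⟪ρ (onI m I) v, w⟫_ℂ = ⟪v, ρ (onI m I) w⟫_ℂ := fun I => by
      rw [← hρ.inner_map_inv_left, onI_inv hm]
    have hscalar : starRingEnd ℂ 2 ^ k = 2 ^ k := by rw [map_ofNat]
    simp [invProj, inner_smul_left, inner_smul_right, sum_inner, inner_sum, hterm, hscalar]

theorem IsUnitaryRep.norm_invProj_sq (hρ : IsUnitaryRep ρ) (hm : m * m = 1) (v : V) :
    ((‖invProj ρ m v‖ ^ 2 : ℝ) : ℂ) = (2 ^ k)⁻¹ * ∑ I, ⟪v, ρ (onI m I) v⟫_ℂ := by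
  have hproj := hρ.isSymmetricProjection_invProj hm
  calc ((‖invProj ρ m v‖ ^ 2 : ℝ) : ℂ) = ⟪invProj ρ m v, invProj ρ m v⟫_ℂ := by
        rw [inner_self_eq_norm_sq_to_K]; push_cast; rfl
    _ = ⟪v, (invProj ρ m * invProj ρ m) v⟫_ℂ := hproj.isSymmetric _ _
    _ = ⟪v, invProj ρ m v⟫_ℂ := by rw [hproj.isIdempotentElem.eq]
    _ = _ := by simp only [invProj, LinearMap.smul_apply, LinearMap.sum_apply, inner_smul_right,
        inner_sum]

variable [FiniteDimensional ℂ V] [Fintype ι]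

theorem IsUnitaryRep.sum_norm_invProj_sq (hρ : IsUnitaryRep ρ) (hm : m * m = 1)
    (b : OrthonormalBasis ι ℂ V) :
    ∑ x, ‖invProj ρ m (b x)‖ ^ 2 = finrank ℂ (LinearMap.range (invProj ρ m)) := by
  have hcast : ((∑ x, ‖invProj ρ m (b x)‖ ^ 2 : ℝ) : ℂ) =
      finrank ℂ (LinearMap.range (invProj ρ m)) := by
    rw [Complex.ofReal_sum, finrank_range_invProj ρ hm]
    simp only [hρ.norm_invProj_sq hm, ← Finset.mul_sum, repChar_eq_sum_inner b]
    rw [Finset.sum_comm]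
  exact_mod_cast hcast

theorem IsUnitaryRep.norm_invProj_sq_sub_le (hρ : IsUnitaryRep ρ) (hρ' : IsIrreducibleRep ρ)
    (hm : m * m = 1) {v : V} (hv : ‖v‖ = 1) :
    |‖invProj ρ m v‖ ^ 2 - (finrank ℂ (LinearMap.range (invProj ρ m)) : ℝ) / finrank ℂ V| ≤
      (2 ^ k)⁻¹ * ∑ I ∈ Finset.univ.erase ∅, ‖⟪v, ρ (onI m I) v⟫_ℂ - charRatio ρ (onI m I)‖ := by
  have hd : (finrank ℂ V : ℂ) ≠ 0 := by exact_mod_cast hρ'.finrank_pos.ne'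
  have hempty : ⟪v, ρ (onI m ∅) v⟫_ℂ - charRatio ρ (onI m ∅) = 0 := by
    simp [onI_empty, charRatio, repChar_one, inner_self_eq_norm_sq_to_K, hv, hd]
  have hdiff : ((‖invProj ρ m v‖ ^ 2 -
        (finrank ℂ (LinearMap.range (invProj ρ m)) : ℝ) / finrank ℂ V : ℝ) : ℂ) =
      (2 ^ k)⁻¹ * ∑ I ∈ Finset.univ.erase ∅,
        (⟪v, ρ (onI m I) v⟫_ℂ - charRatio ρ (onI m I)) := by
    rw [Finset.sum_erase (f := fun I => ⟪v, ρ (onI m I) v⟫_ℂ - charRatio ρ (onI m I)) _ hempty,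
      Finset.sum_sub_distrib, mul_sub, ← hρ.norm_invProj_sq hm,
      ← finrank_range_invProj_div_finrank ρ hm]
    push_cast
    rfl
  rw [← Real.norm_eq_abs, ← Complex.norm_real, hdiff, norm_mul, norm_inv, norm_pow,
    Complex.norm_ofNat]
  gcongr
  exact norm_sum_le _ _

theorem IsUnitaryRep.abs_norm_invProj_sq_div_sub_le [Finite G] (hρ : IsUnitaryRep ρ)
    (hρ' : IsIrreducibleRep ρ) (hm : m * m = 1) {lam : ℝ} (hlam : lam < 1)
    (hgood : ∀ l, ‖charRatio ρ (onI m {l})‖ ≤ lam) {v : V} (hv : ‖v‖ = 1) :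
    |‖invProj ρ m v‖ ^ 2 / (finrank ℂ (LinearMap.range (invProj ρ m)) : ℝ) - 1 / finrank ℂ V| ≤
      ((1 - lam) ^ k)⁻¹ * (∑ I ∈ Finset.univ.erase ∅,
        ‖⟪v, ρ (onI m I) v⟫_ℂ - charRatio ρ (onI m I)‖) / finrank ℂ V := by
  have hd : (0 : ℝ) < finrank ℂ V := by exact_mod_cast hρ'.finrank_pos
  have hlam' : 0 < (1 - lam) ^ k := pow_pos (sub_pos.2 hlam) k
  have hdev := hρ.norm_invProj_sq_sub_le hρ' hm hv
  have hrank := hρ'.le_finrank_range_invProj hm hlam.le hgood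
  set r : ℝ := (finrank ℂ (LinearMap.range (invProj ρ m)) : ℝ)
  set d : ℝ := (finrank ℂ V : ℝ)
  set S := ∑ I ∈ Finset.univ.erase ∅, ‖⟪v, ρ (onI m I) v⟫_ℂ - charRatio ρ (onI m I)‖
  have hr : 0 < r := (div_pos_iff_of_pos_right hd).1 (lt_of_lt_of_le (by positivity) hrank)
  have : 0 ≤ S := Finset.sum_nonneg fun _ _ => norm_nonneg _
  calc |‖invProj ρ m v‖ ^ 2 / r - 1 / d| = |‖invProj ρ m v‖ ^ 2 - r / d| / r := by
        rw [← abs_of_pos hr, ← abs_div, abs_of_pos hr]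
        congr 1
        field_simp
    _ ≤ (2 ^ k)⁻¹ * S / r := by gcongr
    _ = ((1 - lam) ^ k)⁻¹ * S / r * ((2 ^ k)⁻¹ * (1 - lam) ^ k) := by field_simp
    _ ≤ ((1 - lam) ^ k)⁻¹ * S / r * (r / d) := by gcongr
    _ = ((1 - lam) ^ k)⁻¹ * S / d := by field_simp

end UnitaryInvProj

section MeanDeviation

theorem sum_norm_sub_sq_le_sum_norm_sq {ι E : Type*} [Fintype ι] [NormedAddCommGroup E]
    [InnerProductSpace ℝ E] {X : ι → E} {c : E} (h : ∑ x, X x = (Fintype.card ι : ℝ) • c) :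
    ∑ x, ‖X x - c‖ ^ 2 ≤ ∑ x, ‖X x‖ ^ 2 := by
  have hcross : ∑ x, ⟪X x, c⟫_ℝ = Fintype.card ι * ‖c‖ ^ 2 := by
    rw [← sum_inner, h, real_inner_smul_left, real_inner_self_eq_norm_sq]
  have hc : 0 ≤ (Fintype.card ι : ℝ) * ‖c‖ ^ 2 := by positivity
  simp only [norm_sub_sq_real, Finset.sum_add_distrib, Finset.sum_sub_distrib, ← Finset.mul_sum,
    hcross, Finset.sum_const, Finset.card_univ, nsmul_eq_mul]
  linarith

theorem sum_sum_norm_inner_sub_charRatio_le {G V ι : Type*} [Group G] [NormedAddCommGroup V]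
    [InnerProductSpace ℂ V] [Fintype ι] (b : OrthonormalBasis ι ℂ V)
    (ρ : Representation ℂ G V) (M : Finset G) :
    ∑ m ∈ M, ∑ x, ‖⟪b x, ρ m (b x)⟫_ℂ - charRatio ρ m‖ ≤
      M.card * finrank ℂ V * √(meanSqCoeff b ρ M) := by
  have hcard : Fintype.card ι = finrank ℂ V := (finrank_eq_card_basis b.toBasis).symm
  have hvar : ∀ m, ∑ x, ‖⟪b x, ρ m (b x)⟫_ℂ - charRatio ρ m‖ ^ 2 ≤
      ∑ x, ‖⟪b x, ρ m (b x)⟫_ℂ‖ ^ 2 := fun m => by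
    cases isEmpty_or_nonempty ι
    · simp
    have hd : (finrank ℂ V : ℂ) ≠ 0 := by rw [← hcard]; exact_mod_cast Fintype.card_ne_zero
    refine sum_norm_sub_sq_le_sum_norm_sq ?_
    rw [← repChar_eq_sum_inner b, hcard, charRatio, Complex.real_smul, Complex.ofReal_natCast,
      mul_div_cancel₀ _ hd]
  have hcs := sq_sum_le_card_mul_sum_sq (s := M ×ˢ (Finset.univ : Finset ι))
    (f := fun p => ‖⟪b p.2, ρ p.1 (b p.2)⟫_ℂ - charRatio ρ p.1‖)
  rw [Finset.sum_product, Finset.sum_product, Finset.card_product, Finset.card_univ, hcard,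
    Nat.cast_mul] at hcs
  set n : ℝ := M.card * finrank ℂ V
  set S : ℝ := ∑ m ∈ M, ∑ x, ‖⟪b x, ρ m (b x)⟫_ℂ‖ ^ 2
  calc ∑ m ∈ M, ∑ x, ‖⟪b x, ρ m (b x)⟫_ℂ - charRatio ρ m‖
      ≤ √(n * ∑ m ∈ M, ∑ x, ‖⟪b x, ρ m (b x)⟫_ℂ - charRatio ρ m‖ ^ 2) :=
        Real.le_sqrt_of_sq_le hcs
    _ ≤ √(n * S) := by gcongr; exact Finset.sum_le_sum fun m _ => hvar m
    _ = n / √n * √S := by rw [Real.div_sqrt, Real.sqrt_mul (by positivity)]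
    _ = n * √(S / n) := by rw [Real.sqrt_div' _ (by positivity)]; ring

/-- The mean over `m ∈ M` of the `ℓ¹` distance between the distribution
`b ↦ ‖Π_m b‖² / rank Π_m` on an orthonormal basis and the uniform one. -/
def meanDeviation {G V ι : Type*} [Group G] [NormedAddCommGroup V] [InnerProductSpace ℂ V]
    [Fintype ι] {k : ℕ} (b : OrthonormalBasis ι ℂ V) (ρ : Representation ℂ (Fin k → G) V)
    (M : Finset G) : ℝ :=
  (1 / (M.card : ℝ)) * ∑ m ∈ M, ∑ x,
    |‖invProj ρ m (b x)‖ ^ 2 / (finrank ℂ (LinearMap.range (invProj ρ m)) : ℝ) -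
      1 / (finrank ℂ V : ℝ)|

variable {G V ι : Type*} [Group G] [NormedAddCommGroup V] [InnerProductSpace ℂ V]
  [FiniteDimensional ℂ V] [Fintype ι] {k : ℕ} {ρ : Representation ℂ (Fin k → G) V}
  {M : Finset G}

theorem IsUnitaryRep.sum_abs_norm_invProj_sq_div_sub_le_two (hρ : IsUnitaryRep ρ)
    (b : OrthonormalBasis ι ℂ V) {m : G} (hm : m * m = 1) :
    ∑ x, |‖invProj ρ m (b x)‖ ^ 2 / (finrank ℂ (LinearMap.range (invProj ρ m)) : ℝ) -
      1 / (finrank ℂ V : ℝ)| ≤ 2 := by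
  set r : ℝ := (finrank ℂ (LinearMap.range (invProj ρ m)) : ℝ)
  set d : ℝ := (finrank ℂ V : ℝ) with hd
  have hcard : (Fintype.card ι : ℝ) = d := by rw [hd, finrank_eq_card_basis b.toBasis]
  calc ∑ x, |‖invProj ρ m (b x)‖ ^ 2 / r - 1 / d|
      ≤ ∑ x, (‖invProj ρ m (b x)‖ ^ 2 / r + 1 / d) := Finset.sum_le_sum fun x _ =>
        (abs_sub _ _).trans_eq
          (by rw [abs_of_nonneg (by positivity), abs_of_nonneg (by positivity)])
    _ = r / r + d / d := by
        rw [Finset.sum_add_distrib, ← Finset.sum_div, hρ.sum_norm_invProj_sq hm b, Finset.sum_const,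
          Finset.card_univ, nsmul_eq_mul, hcard, mul_one_div]
    _ ≤ 2 := by linarith [div_self_le_one r, div_self_le_one d]

theorem IsUnitaryRep.meanDeviation_le_two (hρ : IsUnitaryRep ρ) (b : OrthonormalBasis ι ℂ V)
    (hM : ∀ m ∈ M, m * m = 1) : meanDeviation b ρ M ≤ 2 := by
  have hsum := Finset.sum_le_card_nsmul M _ 2 fun m hm =>
    hρ.sum_abs_norm_invProj_sq_div_sub_le_two b (hM m hm)
  rw [nsmul_eq_mul] at hsum
  calc meanDeviation b ρ M ≤ 1 / M.card * (M.card * 2) := by rw [meanDeviation]; gcongr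
    _ = M.card / M.card * 2 := by ring
    _ ≤ 2 := by linarith [div_self_le_one (M.card : ℝ)]

theorem IsUnitaryRep.meanDeviation_le_sum_sqrt [Finite G] (hρ : IsUnitaryRep ρ)
    (hρ' : IsIrreducibleRep ρ) (b : OrthonormalBasis ι ℂ V) (hM : ∀ m ∈ M, m * m = 1)
    {lam : ℝ} (hlam : lam < 1) (hgood : ∀ m ∈ M, ∀ l, ‖charRatio ρ (onI m {l})‖ ≤ lam) :
    meanDeviation b ρ M ≤ ((1 - lam) ^ k)⁻¹ *
      ∑ I ∈ Finset.univ.erase ∅, √(meanSqCoeff b (ρ.comp (diagHom I)) M) := by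
  have hlam' : 0 < 1 - lam := sub_pos.2 hlam
  have hd : (finrank ℂ V : ℝ) ≠ 0 := by exact_mod_cast hρ'.finrank_pos.ne'
  set D : G → ι → Finset (Fin k) → ℝ := fun m x I =>
    ‖⟪b x, ρ (onI m I) (b x)⟫_ℂ - charRatio ρ (onI m I)‖
  have hI : ∀ I, ∑ m ∈ M, ∑ x, D m x I ≤
      M.card * finrank ℂ V * √(meanSqCoeff b (ρ.comp (diagHom I)) M) := fun I =>
    sum_sum_norm_inner_sub_charRatio_le b (ρ.comp (diagHom I)) M
  calc meanDeviation b ρ M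
      ≤ 1 / M.card * ∑ m ∈ M, ∑ x, ((1 - lam) ^ k)⁻¹ *
          (∑ I ∈ Finset.univ.erase ∅, D m x I) / finrank ℂ V := by
        rw [meanDeviation]
        gcongr with m hm x
        exact hρ.abs_norm_invProj_sq_div_sub_le hρ' (hM m hm) hlam (hgood m hm)
          (b.orthonormal.1 x)
    _ = ((1 - lam) ^ k)⁻¹ * ∑ I ∈ Finset.univ.erase ∅,
          (∑ m ∈ M, ∑ x, D m x I) / (M.card * finrank ℂ V) := by
        simp only [mul_div_assoc, ← Finset.mul_sum, ← Finset.sum_div]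
        rw [Finset.sum_comm_cycle]
        field_simp
    _ ≤ _ := by
        gcongr with I
        refine div_le_of_le_mul₀ (by positivity) (Real.sqrt_nonneg _) ?_
        rw [mul_comm]
        exact hI I

end MeanDeviation

section PlancherelMeanDeviation

variable {G V ι : Type*} [Group G] [Finite G] [NormedAddCommGroup V] [InnerProductSpace ℂ V]
  [FiniteDimensional ℂ V] [Fintype ι] {k : ℕ} {ρ : Representation ℂ (Fin k → G) V}
  {M : Finset G} {m₀ : G} {lam : ℝ}

theorem IsUnitaryRep.meanDeviation_le_sum_sqrt_add (hρ : IsUnitaryRep ρ)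
    (hρ' : IsIrreducibleRep ρ) (b : OrthonormalBasis ι ℂ V) (hM : ∀ m, m ∈ M ↔ IsConj m₀ m)
    (hM2 : ∀ m ∈ M, m * m = 1) (hlam : lam < 1) :
    meanDeviation b ρ M ≤ ((1 - lam) ^ k)⁻¹ *
        (∑ I ∈ Finset.univ.erase ∅, √(meanSqCoeff b (ρ.comp (diagHom I)) M)) +
      2 * ∑ l, if lam < ‖charRatio ρ (diagHom {l} m₀)‖ then 1 else 0 := by
  have : 0 < 1 - lam := sub_pos.2 hlam
  by_cases hgood : ∀ l, ‖charRatio ρ (diagHom {l} m₀)‖ ≤ lam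
  · have hgoodM : ∀ m ∈ M, ∀ l, ‖charRatio ρ (onI m {l})‖ ≤ lam := fun m hm l => by
      obtain ⟨c, rfl⟩ := isConj_iff.1 ((hM m).1 hm)
      have hconj : charRatio ρ (diagHom {l} (c * m₀ * c⁻¹)) = charRatio ρ (diagHom {l} m₀) := by
        rw [map_mul, map_mul, map_inv, charRatio, repChar_conj, charRatio]
      exact hconj ▸ hgood l
    refine (hρ.meanDeviation_le_sum_sqrt hρ' b hM2 hlam hgoodM).trans (le_add_of_nonneg_right ?_)
    positivity
  · push Not at hgood
    obtain ⟨l, hl⟩ := hgood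
    have hone : (1 : ℝ) ≤ ∑ l, if lam < ‖charRatio ρ (diagHom {l} m₀)‖ then 1 else 0 := by
      simpa [hl] using Finset.single_le_sum
        (f := fun l => if lam < ‖charRatio ρ (diagHom {l} m₀)‖ then (1 : ℝ) else 0)
        (fun l _ => by positivity) (Finset.mem_univ l)
    have hnonneg : 0 ≤ ((1 - lam) ^ k)⁻¹ *
        ∑ I ∈ Finset.univ.erase ∅, √(meanSqCoeff b (ρ.comp (diagHom I)) M) := by positivity
    linarith [hρ.meanDeviation_le_two b hM2]

theorem IsCompleteFamily.sum_plancherel_mul_meanDeviation_le {G : Type*} [Group G] [Fintype G]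
    {J : Type*} [Fintype J] {W : J → Type*} [∀ j, NormedAddCommGroup (W j)]
    [∀ j, InnerProductSpace ℂ (W j)] [∀ j, FiniteDimensional ℂ (W j)]
    {σ : ∀ j, Representation ℂ G (W j)} {T : Type*} [Fintype T]
    {V : T → Type*} [∀ i, NormedAddCommGroup (V i)] [∀ i, InnerProductSpace ℂ (V i)]
    [∀ i, FiniteDimensional ℂ (V i)] {ρ : ∀ i, Representation ℂ (Fin k → G) (V i)}
    {ι : T → Type*} [∀ i, Fintype (ι i)] {M : Finset G} {m₀ : G} {Λ : Finset J}
    (hρ : IsCompleteFamily V ρ) (b : ∀ i, OrthonormalBasis (ι i) ℂ (V i))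
    (hσ : IsCompleteFamily W σ) (hM : ∀ m, m ∈ M ↔ IsConj m₀ m) (hM2 : ∀ m ∈ M, m * m = 1)
    (hlam0 : 0 ≤ lam) (hlam1 : lam < 1)
    (hΛ : ∀ j ∉ Λ, ‖repChar (σ j) m₀‖ ≤ lam * finrank ℂ (W j)) :
    ∑ i, (finrank ℂ (V i) : ℝ) ^ 2 / Fintype.card (Fin k → G) * meanDeviation (b i) (ρ i) M ≤
      (2 ^ k - 1) * (((1 - lam) ^ k)⁻¹ *
          √(lam + (∑ j ∈ Λ, (finrank ℂ (W j) : ℝ) ^ 2 / Fintype.card G) *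
            ∑ j, (finrank ℂ (W j) : ℝ))) +
        2 * k * ∑ j ∈ Λ, (finrank ℂ (W j) : ℝ) ^ 2 / Fintype.card G := by
  have : 0 < 1 - lam := sub_pos.2 hlam1
  set w : T → ℝ := fun i => (finrank ℂ (V i) : ℝ) ^ 2 / Fintype.card (Fin k → G)
  set P := ∑ j ∈ Λ, (finrank ℂ (W j) : ℝ) ^ 2 / Fintype.card G
  set Δ := lam + P * ∑ j, (finrank ℂ (W j) : ℝ)
  have hcard : ((Finset.univ.erase (∅ : Finset (Fin k))).card : ℝ) = 2 ^ k - 1 := by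
    simp [Finset.card_erase_of_mem]
  have hcoeff : ∀ I ∈ Finset.univ.erase (∅ : Finset (Fin k)),
      ∑ i, w i * √(meanSqCoeff (b i) ((ρ i).comp (diagHom I)) M) ≤ √Δ := fun I hI =>
    hρ.sum_plancherel_mul_sqrt_meanSqCoeff_le
      (diagHom_injective (Finset.nonempty_iff_ne_empty.2 (Finset.ne_of_mem_erase hI)))
      b hσ hM hlam0 hΛ
  have hlarge : ∀ l : Fin k,
      ∑ i, w i * (if lam < ‖charRatio (ρ i) (diagHom {l} m₀)‖ then 1 else 0) ≤ P := fun l =>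
    hρ.sum_plancherel_lt_norm_charRatio_le (diagHom_injective (Finset.singleton_nonempty l))
      (inducesInnerAut_diagHom_singleton l) hσ hM hlam0 hΛ
  calc ∑ i, w i * meanDeviation (b i) (ρ i) M
      ≤ ∑ i, w i * (((1 - lam) ^ k)⁻¹ *
          (∑ I ∈ Finset.univ.erase ∅, √(meanSqCoeff (b i) ((ρ i).comp (diagHom I)) M)) +
        2 * ∑ l, if lam < ‖charRatio (ρ i) (diagHom {l} m₀)‖ then 1 else 0) := by
        gcongr with i
        exact (hρ.1 i).meanDeviation_le_sum_sqrt_add (hρ.2.1 i) (b i) hM hM2 hlam1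
    _ = ((1 - lam) ^ k)⁻¹ * (∑ I ∈ Finset.univ.erase ∅,
          ∑ i, w i * √(meanSqCoeff (b i) ((ρ i).comp (diagHom I)) M)) +
        2 * ∑ l, ∑ i, w i * if lam < ‖charRatio (ρ i) (diagHom {l} m₀)‖ then 1 else 0 := by
        rw [Finset.sum_comm (s := Finset.univ.erase ∅), Finset.sum_comm (γ := Fin k)]
        simp only [mul_add, Finset.sum_add_distrib, Finset.mul_sum, mul_left_comm]
    _ ≤ ((1 - lam) ^ k)⁻¹ * ((2 ^ k - 1) * √Δ) + 2 * (k * P) := by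
        gcongr
        · simpa only [nsmul_eq_mul, hcard] using Finset.sum_le_card_nsmul _ _ _ hcoeff
        · simpa using Finset.sum_le_card_nsmul Finset.univ _ _ fun l _ => hlarge l
    _ = _ := by ring

end PlancherelMeanDeviation

/-- (Lemma 10 of the paper.) With `Δ = λ + P(Λ) Σ_j d_j` and
`H_m(i,b) = ‖Π_m^{(i)} b‖² / rank(Π_m^{(i)})` (convention `x/0 = 0`), the Plancherel- and
`m`-average of the ℓ¹-distance `Σ_b |H_m(i,b) − 1/d_i|` is at most
`2^k ((1−λ)^{-k} √Δ + 3(λ + P(Λ)))`. -/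
theorem stmt15 {G : Type*} [Group G] [Fintype G]
    {J : Type*} [Fintype J]
    (W : J → Type*) [∀ j, NormedAddCommGroup (W j)] [∀ j, InnerProductSpace ℂ (W j)]
    [∀ j, FiniteDimensional ℂ (W j)]
    (σ : ∀ j, Representation ℂ G (W j)) (hfam : IsCompleteFamily W σ)
    (M : Finset G) (m₀ : G) (hm₀M : m₀ ∈ M)
    (hM : ∀ m : G, m ∈ M ↔ IsConj m₀ m)
    (hinv : ∀ m ∈ M, m * m = 1 ∧ m ≠ 1)
    {k : ℕ} (hk : 1 ≤ k)
    {T : Type*} [Fintype T]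
    (Vi : T → Type*) [∀ i, NormedAddCommGroup (Vi i)] [∀ i, InnerProductSpace ℂ (Vi i)]
    [∀ i, FiniteDimensional ℂ (Vi i)]
    (ρi : ∀ i, Representation ℂ (Fin k → G) (Vi i)) (hfam' : IsCompleteFamily Vi ρi)
    (ι : T → Type*) [∀ i, Fintype (ι i)] (B : ∀ i, OrthonormalBasis (ι i) ℂ (Vi i))
    (Λ : Finset J) (lam : ℝ) (hlam0 : 0 ≤ lam) (hlam1 : lam < 1)
    (hΛ : ∀ j ∉ Λ, ‖repChar (σ j) m₀‖ ≤ lam * (Module.finrank ℂ (W j) : ℝ)) :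
    ∑ i, (Module.finrank ℂ (Vi i) : ℝ) ^ 2 / (Fintype.card G : ℝ) ^ k *
        ((1 / (M.card : ℝ)) * ∑ m ∈ M, ∑ x : ι i,
          |‖invProj (ρi i) m (B i x)‖ ^ 2
              / (Module.finrank ℂ (LinearMap.range (invProj (ρi i) m)) : ℝ)
            - 1 / (Module.finrank ℂ (Vi i) : ℝ)|)
      ≤ 2 ^ k * (((1 - lam) ^ k)⁻¹ *
            Real.sqrt (lam +
              (∑ j ∈ Λ, (Module.finrank ℂ (W j) : ℝ) ^ 2 / (Fintype.card G : ℝ)) *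
                ∑ j, (Module.finrank ℂ (W j) : ℝ))
          + 3 * (lam + ∑ j ∈ Λ, (Module.finrank ℂ (W j) : ℝ) ^ 2 / (Fintype.card G : ℝ))) := by
  set P := ∑ j ∈ Λ, (finrank ℂ (W j) : ℝ) ^ 2 / (Fintype.card G : ℝ)
  set X := ((1 - lam) ^ k)⁻¹ * √(lam + P * ∑ j, (finrank ℂ (W j) : ℝ))
  have : 0 ≤ P := by positivity
  have : 0 ≤ X := mul_nonneg (by have := sub_pos.2 hlam1; positivity) (Real.sqrt_nonneg _)
  have hk2 : (k : ℝ) ≤ 2 ^ k := by exact_mod_cast Nat.lt_two_pow_self.le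
  have hbound := hfam'.sum_plancherel_mul_meanDeviation_le B hfam hM (fun m hm => (hinv m hm).1)
    hlam0 hlam1 hΛ
  simp only [Fintype.card_fun, Fintype.card_fin, Nat.cast_pow] at hbound
  calc _ ≤ (2 ^ k - 1) * X + 2 * k * P := hbound
    _ ≤ 2 ^ k * X + 2 * 2 ^ k * P := by gcongr; linarith
    _ ≤ 2 ^ k * (X + 3 * (lam + P)) := by
        have : 0 ≤ (2 : ℝ) ^ k * (3 * lam + P) := by positivity
        linarith
end
end

section
/- Let G be a finite group, let ρ be an irreducible finite-dimensional complex representation of G on V, let K = (G × G) ⋊ Z₂ with Z₂ acting by the swap automorphism, let S : V ⊗ V → V ⊗ V be the flip map determined by S(u ⊗ v) = v ⊗ u, and let ε ∈ {1,−1}. Then the representation τ_ε of K on V ⊗ V defined by τ_ε((α,β),t) = ε^t · (ρ(α) ⊗ ρ(β)) ∘ S^t is irreducible: the only subspaces of V ⊗ V invariant under all τ_ε(x), x ∈ K, are 0 and V ⊗ V. -/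
noncomputable section

open scoped BigOperators InnerProductSpace

noncomputable section

open scoped BigOperators InnerProductSpace

/-- The swap automorphism of `G × G`. -/
def swapAut (G : Type*) [Group G] : MulAut (G × G) := (MulEquiv.prodComm : (G × G) ≃* (G × G))

lemma swapAut_sq (G : Type*) [Group G] : swapAut G * swapAut G = 1 := by
  ext p <;> simp [swapAut, MulAut.mul_apply]

/-- The homomorphism `Z₂ → Aut(G × G)` sending the nontrivial element to the swap. -/
def swapHom (G : Type*) [Group G] : Multiplicative (ZMod 2) →* MulAut (G × G) where
  toFun t := swapAut G ^ (t.toAdd.val)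
  map_one' := by
    show swapAut G ^ ((0 : ZMod 2)).val = 1
    simp
  map_mul' a b := by
    have h2 : ∀ x : ZMod 2, x = 0 ∨ x = 1 := by decide
    have key : ∀ x y : ZMod 2,
        swapAut G ^ (x + y).val = swapAut G ^ x.val * swapAut G ^ y.val := by
      intro x y
      have v00 : ((0 : ZMod 2) + 0).val = 0 := by decide
      have v01 : ((0 : ZMod 2) + 1).val = 1 := by decide
      have v10 : ((1 : ZMod 2) + 0).val = 1 := by decide
      have v11 : ((1 : ZMod 2) + 1).val = 0 := by decide
      have v0 : (0 : ZMod 2).val = 0 := by decide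
      have v1 : (1 : ZMod 2).val = 1 := by decide
      rcases h2 x with hx | hx <;> rcases h2 y with hy | hy <;> subst hx <;> subst hy <;>
        simp [v00, v01, v10, v11, v0, v1, swapAut_sq G]
    exact key a.toAdd b.toAdd

/-- `K = (G × G) ⋊ Z₂`, with `Z₂` acting by the swap automorphism. -/
abbrev wreathZ2 (G : Type*) [Group G] : Type _ :=
  SemidirectProduct (G × G) (Multiplicative (ZMod 2)) (swapHom G)

instance (G : Type*) [Group G] [Fintype G] : Fintype (wreathZ2 G) :=
  Fintype.ofEquiv ((G × G) × Multiplicative (ZMod 2))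
    { toFun := fun p => ⟨p.1, p.2⟩
      invFun := fun x => (x.left, x.right)
      left_inv := fun _ => rfl
      right_inv := fun _ => rfl }


/-- `τ_ε((α,β),t) = ε^t (ρ(α) ⊗ ρ(β)) ∘ S^t` on `V ⊗ V`, where `S` is the flip. -/
def tauEps {G V : Type*} [Group G] [AddCommGroup V] [Module ℂ V]
    (ρ : Representation ℂ G V) (ε : ℂ) :
    wreathZ2 G → (TensorProduct ℂ V V →ₗ[ℂ] TensorProduct ℂ V V) :=
  fun x => ε ^ (x.right.toAdd.val) •
    (TensorProduct.map (ρ x.left.1) (ρ x.left.2) ∘ₗ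
      ((TensorProduct.comm ℂ V V).toLinearMap ^ x.right.toAdd.val))

/-!
The subgroup `G × G` of `K` already acts irreducibly on `V ⊗ V`. Let `X ≠ 0` be a subspace invariant
under it. By Schur's lemma the endomorphisms of `ρ` are scalars, so by the Jacobson density theorem
every `f ∈ End V` agrees with an element of the group algebra on any finite set of vectors; hence
`X` is stable under all `f ⊗ 1`. Taking `f` of rank one, `u ↦ φ(u) v`, produces a vector `w ≠ 0`
with `V ⊗ w ⊆ X`. The vectors `w` with `V ⊗ w ⊆ X` form a nonzero subspace which is invariant under
the second factor, hence all of `V`.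
-/

open scoped TensorProduct MonoidAlgebra
open Function Representation

theorem exists_forall_eq_smul_of_surjective_algebraMap_end {k A M : Type*} [CommSemiring k]
    [Ring A] [SMul k A] [AddCommGroup M] [Module k M] [Module A M] [IsScalarTower k A M]
    [SMulCommClass A k M] [IsSemisimpleModule A M]
    (hM : Surjective (algebraMap k (Module.End A M))) (f : Module.End k M) (s : Finset M) :
    ∃ a : A, ∀ m ∈ s, f m = a • m := by
  let F : Module.End (Module.End A M) M :=
    { f with
      map_smul' := fun e m ↦ by
        obtain ⟨c, rfl⟩ := hM e
        exact f.map_smul c m }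
  exact jacobson_density F s

section TensorProduct

variable {k G V W : Type*} [CommSemiring k] [Monoid G] [AddCommMonoid V] [Module k V]
  [AddCommMonoid W] [Module k W]

theorem exists_dual_rTensor_ne_zero [Module.Free k V] {x : V ⊗[k] W} (hx : x ≠ 0) :
    ∃ φ : Module.Dual k V, TensorProduct.lid k W (φ.rTensor W x) ≠ 0 := by
  classical
  let b := Module.Free.chooseBasis k V
  by_contra! h
  refine hx ((TensorProduct.equivFinsuppOfBasisLeft b).injective (Finsupp.ext fun i ↦ ?_))
  rw [TensorProduct.equivFinsuppOfBasisLeft_apply, h, map_zero, Finsupp.zero_apply]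

theorem rTensor_smulRight_apply (φ : Module.Dual k V) (v : V) (x : V ⊗[k] W) :
    (φ.smulRight v).rTensor W x = v ⊗ₜ TensorProduct.lid k W (φ.rTensor W x) := by
  induction x with
  | zero => simp
  | tmul u w => simp [TensorProduct.smul_tmul]
  | add x y hx hy => simp only [map_add, hx, hy, TensorProduct.tmul_add]

theorem exists_ne_zero_forall_tmul_mem [Module.Free k V] {X : Submodule k (V ⊗[k] W)}
    (hX : ∀ f : Module.End k V, ∀ x ∈ X, f.rTensor W x ∈ X) (hX₀ : X ≠ ⊥) :
    ∃ w : W, w ≠ 0 ∧ ∀ v : V, v ⊗ₜ w ∈ X := by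
  obtain ⟨x, hxX, hx⟩ := X.exists_mem_ne_zero_of_ne_bot hX₀
  obtain ⟨φ, hφ⟩ := exists_dual_rTensor_ne_zero hx
  exact ⟨_, hφ, fun v ↦ rTensor_smulRight_apply φ v x ▸ hX _ x hxX⟩

theorem rTensor_asAlgebraHom_mem {ρ : Representation k G V} {X : Submodule k (V ⊗[k] W)}
    (hX : ∀ g, ∀ x ∈ X, (ρ g).rTensor W x ∈ X) (a : k[G]) {x : V ⊗[k] W} (hx : x ∈ X) :
    (ρ.asAlgebraHom a).rTensor W x ∈ X := by
  let ρW : Representation k G (V ⊗[k] W) :=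
    (Module.End.rTensorAlgHom k V W : Module.End k V →* Module.End k (V ⊗[k] W)).comp ρ
  have hρW : ρW.asAlgebraHom = (Module.End.rTensorAlgHom k V W).comp ρ.asAlgebraHom := by
    ext; simp [ρW]
  exact congr($hρW a x) ▸ ρW.asAlgebraHom_mem_of_forall_mem X hX x hx a

end TensorProduct

section OuterTensor

variable {k G H V W : Type*} [CommSemiring k] [Monoid G] [Monoid H] [AddCommMonoid V] [Module k V]
  [AddCommMonoid W] [Module k W] (ρ : Representation k G V) (σ : Representation k H W)

/-- The outer tensor product `ρ ⊠ σ`, the representation of `G × H` on `V ⊗ W` by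
`(g, h) ↦ ρ g ⊗ σ h`. It is encoded as the tensor product of the pullbacks of `ρ` and `σ` along the
two projections. -/
def outerTensor : Representation k (G × H) (V ⊗[k] W) :=
  Representation.tprod (k := k) (G := G × H) (ρ.comp (.fst G H)) (σ.comp (.snd G H))

theorem outerTensor_apply (p : G × H) :
    outerTensor ρ σ p = TensorProduct.map (ρ p.1) (σ p.2) :=
  rfl

theorem outerTensor_apply_mk_one (g : G) : outerTensor ρ σ (g, 1) = (ρ g).rTensor W := by
  rw [outerTensor_apply, map_one, Module.End.one_eq_id, LinearMap.rTensor]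

theorem outerTensor_apply_one_mk (h : H) : outerTensor ρ σ (1, h) = (σ h).lTensor V := by
  rw [outerTensor_apply, map_one, Module.End.one_eq_id, LinearMap.lTensor]

end OuterTensor

section Irreducible

variable {k G H V W : Type*} [Field k] [Monoid G] [Monoid H] [AddCommGroup V] [Module k V]
  [AddCommGroup W] [Module k W] {ρ : Representation k G V} {σ : Representation k H W}

theorem isIrreducible_iff_forall_invariant :
    ρ.IsIrreducible ↔ Nontrivial V ∧
      ∀ X : Submodule k V, (∀ g, ∀ v ∈ X, ρ g v ∈ X) → X = ⊥ ∨ X = ⊤ := by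
  constructor
  · intro hρ
    refine ⟨IsSimpleModule.nontrivial k[G] ρ.asModule, fun X hX ↦ ?_⟩
    exact (eq_bot_or_eq_top (⟨X, hX⟩ : Subrepresentation ρ)).imp
      (congr_arg Subrepresentation.toSubmodule) (congr_arg Subrepresentation.toSubmodule)
  · rintro ⟨_, hinv⟩
    have : Nontrivial (Subrepresentation ρ) :=
      ⟨⊥, ⊤, fun h ↦ bot_ne_top (α := Submodule k V) congr(Subrepresentation.toSubmodule $h)⟩
    exact ⟨fun X ↦ (hinv X.toSubmodule X.apply_mem_toSubmodule).imp
      (Subrepresentation.ext ·) (Subrepresentation.ext ·)⟩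

theorem exists_forall_eq_asAlgebraHom [ρ.IsIrreducible]
    (hρ : Surjective (algebraMap k (IntertwiningMap ρ ρ))) (f : Module.End k V) (s : Finset V) :
    ∃ a : k[G], ∀ v ∈ s, f v = ρ.asAlgebraHom a v :=
  have hEnd : Surjective (algebraMap k (Module.End k[G] ρ.asModule)) :=
    (IntertwiningMap.equivAlgEnd (ρ := ρ)).surjective.comp hρ
  exists_forall_eq_smul_of_surjective_algebraMap_end hEnd f s

theorem exists_rTensor_eq_rTensor_asAlgebraHom [ρ.IsIrreducible]
    (hρ : Surjective (algebraMap k (IntertwiningMap ρ ρ))) (f : Module.End k V) (x : V ⊗[k] W) :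
    ∃ a : k[G], f.rTensor W x = (ρ.asAlgebraHom a).rTensor W x := by
  classical
  obtain ⟨s, rfl⟩ := TensorProduct.exists_finset x
  obtain ⟨a, ha⟩ := exists_forall_eq_asAlgebraHom hρ f (s.image Prod.fst)
  refine ⟨a, ?_⟩
  simp only [map_sum, LinearMap.rTensor_tmul]
  exact Finset.sum_congr rfl fun p hp ↦ by rw [ha p.1 (Finset.mem_image_of_mem _ hp)]

theorem rTensor_mem_of_forall_rTensor_mem [ρ.IsIrreducible]
    (hρ : Surjective (algebraMap k (IntertwiningMap ρ ρ))) {X : Submodule k (V ⊗[k] W)}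
    (hX : ∀ g, ∀ x ∈ X, (ρ g).rTensor W x ∈ X) (f : Module.End k V) {x : V ⊗[k] W} (hx : x ∈ X) :
    f.rTensor W x ∈ X := by
  obtain ⟨a, ha⟩ := exists_rTensor_eq_rTensor_asAlgebraHom hρ f x
  exact ha ▸ rTensor_asAlgebraHom_mem hX a hx

theorem eq_top_of_forall_tmul_mem [σ.IsIrreducible] {X : Submodule k (V ⊗[k] W)}
    (hX : ∀ h, ∀ x ∈ X, (σ h).lTensor V x ∈ X) {w : W} (hw : w ≠ 0)
    (hwX : ∀ v : V, v ⊗ₜ w ∈ X) : X = ⊤ := by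
  let Y : Submodule k W := ⨅ v : V, X.comap (TensorProduct.mk k V W v)
  have mem_Y {u : W} : u ∈ Y ↔ ∀ v : V, v ⊗ₜ u ∈ X := by simp [Y]
  have hY_invariant (h : H) (u : W) (hu : u ∈ Y) : σ h u ∈ Y :=
    mem_Y.2 fun v ↦ hX h _ (mem_Y.1 hu v)
  have hY_ne_bot : Y ≠ ⊥ := (Submodule.ne_bot_iff Y).2 ⟨w, mem_Y.2 hwX, hw⟩
  have hY : Y = ⊤ :=
    ((isIrreducible_iff_forall_invariant.1 ‹σ.IsIrreducible›).2 Y hY_invariant).resolve_left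
      hY_ne_bot
  rw [eq_top_iff, ← TensorProduct.span_tmul_eq_top, Submodule.span_le]
  rintro _ ⟨v, u, rfl⟩
  exact mem_Y.1 (hY ▸ Submodule.mem_top) v

theorem isIrreducible_outerTensor [ρ.IsIrreducible] [σ.IsIrreducible]
    (hρ : Surjective (algebraMap k (IntertwiningMap ρ ρ))) :
    (outerTensor ρ σ).IsIrreducible := by
  have : Nontrivial V := (isIrreducible_iff_forall_invariant.1 ‹ρ.IsIrreducible›).1
  have : Nontrivial W := (isIrreducible_iff_forall_invariant.1 ‹σ.IsIrreducible›).1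
  refine isIrreducible_iff_forall_invariant.2 ⟨inferInstance, fun X hX ↦ ?_⟩
  refine or_iff_not_imp_left.2 fun hX₀ ↦ ?_
  have hX_left (g : G) (x) (hx : x ∈ X) : (ρ g).rTensor W x ∈ X :=
    outerTensor_apply_mk_one ρ σ g ▸ hX (g, 1) x hx
  have hX_right (h : H) (x) (hx : x ∈ X) : (σ h).lTensor V x ∈ X :=
    outerTensor_apply_one_mk ρ σ h ▸ hX (1, h) x hx
  obtain ⟨w, hw, hwX⟩ := exists_ne_zero_forall_tmul_mem
    (fun f _ hx ↦ rTensor_mem_of_forall_rTensor_mem hρ hX_left f hx) hX₀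
  exact eq_top_of_forall_tmul_mem hX_right hw hwX

end Irreducible

section TauEps

variable {G V : Type*} [Group G] [AddCommGroup V] [Module ℂ V] {ρ : Representation ℂ G V}

theorem IsIrreducibleRep.isIrreducible_s18 (hρ : IsIrreducibleRep ρ) : ρ.IsIrreducible :=
  have ⟨⟨v, hv⟩, hinv⟩ := hρ
  isIrreducible_iff_forall_invariant.2 ⟨⟨v, 0, hv⟩, hinv⟩

theorem tauEps_inl (ρ : Representation ℂ G V) (ε : ℂ) (p : G × G) :
    tauEps ρ ε (SemidirectProduct.inl p) = outerTensor ρ ρ p := by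
  simp [tauEps, outerTensor_apply, Module.End.one_eq_id]

end TauEps

theorem stmt18_general {G : Type*} [Group G] {V : Type*} [AddCommGroup V] [Module ℂ V]
    (ρ : Representation ℂ G V) (hρ : IsIrreducibleRep ρ)
    (hEnd : Surjective (algebraMap ℂ (IntertwiningMap ρ ρ))) (ε : ℂ) :
    ∀ W : Submodule ℂ (TensorProduct ℂ V V),
      (∀ (x : wreathZ2 G) (v : TensorProduct ℂ V V), v ∈ W → tauEps ρ ε x v ∈ W) →
      W = ⊥ ∨ W = ⊤ := by
  intro W hW
  have := hρ.isIrreducible_s18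
  have hirr : (outerTensor ρ ρ).IsIrreducible := isIrreducible_outerTensor hEnd
  exact (isIrreducible_iff_forall_invariant.1 hirr).2 W fun p x hx ↦
    tauEps_inl ρ ε p ▸ hW (SemidirectProduct.inl p) x hx

/-- If `ρ` is irreducible, then `τ_ε` is irreducible: the only subspaces of
`V ⊗ V` invariant under all `τ_ε(x)`, `x ∈ K`, are `0` and `V ⊗ V`. -/
theorem stmt18 {G : Type*} [Group G]
    {V : Type*} [AddCommGroup V] [Module ℂ V] [FiniteDimensional ℂ V]
    (ρ : Representation ℂ G V) (hρ : IsIrreducibleRep ρ)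
    (ε : ℂ) (hε : ε = 1 ∨ ε = -1) :
    ∀ W : Submodule ℂ (TensorProduct ℂ V V),
      (∀ (x : wreathZ2 G) (v : TensorProduct ℂ V V), v ∈ W → tauEps ρ ε x v ∈ W) →
      W = ⊥ ∨ W = ⊤ :=
  have := hρ.isIrreducible_s18
  stmt18_general ρ hρ IsIrreducible.algebraMap_intertwiningMap_bijective_of_isAlgClosed.2 ε
end
end
end
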